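/- arXiv:0912.0223 — 3 statements merged into one kernel-verified Lean document; each statement's English description precedes it below -/
import Mathlib

section
/- Let k ≥ 1 and let g : ℝ → ℝ be continuous on (0, ∞). Suppose that for every R > 0 the spherical integral ∫_{v ∈ S^k(R)} g(‖x − v‖) dμH[k](v) is independent of x inside the sphere, i.e. for all x₁, x₂ ∈ E with ‖x₁‖ < R and ‖x₂‖ < R, ∫_{v ∈ S^k(R)} g(‖x₁ − v‖) dμH[k](v) = ∫_{v ∈ S^k(R)} g(‖x₂ − v‖) dμH[k](v). Then the function x ↦ g(‖x‖) is harmonic on E \ {0} (its Laplacian vanishes there). -/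
open MeasureTheory

/-- The Laplacian of `f : ℝ^n → ℝ` at `x`: the sum of the pure second directional
derivatives of `f` at `x` along the standard orthonormal basis vectors. -/
noncomputable def euclideanLaplacian {n : ℕ}
    (f : EuclideanSpace ℝ (Fin n) → ℝ) (x : EuclideanSpace ℝ (Fin n)) : ℝ :=
  ∑ i : Fin n, iteratedFDeriv ℝ 2 f x
    ![EuclideanSpace.single i (1 : ℝ), EuclideanSpace.single i (1 : ℝ)]

/-!
For `0 < p < r` let `h ∘ ‖·‖` be the radial harmonic function on `E \ {0}` with `h p = g p` and
`h r = g r`. If `g - h` is positive somewhere on `[p, r]`, then `g s - h s + ε s²` has an interior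
local maximum `R` for some small `ε > 0`. So the radial function `u = h ∘ ‖·‖ - ε ‖·‖² + c`, for a
suitable constant `c`, touches `g ∘ ‖·‖` from above along the whole sphere of radius `R`, and
`Δ u < 0`. The second differences of `g ∘ ‖·‖` at the points of the sphere lie below those of `u`,
so they are negative, uniformly on the sphere, and integrating them over the sphere shows that the
spherical integral has negative second differences at the origin. This contradicts its constancy.
Applied to `g` and to `-g`, the argument gives `g = h` on `[p, r]`.
-/

open Filter InnerProductSpace Metric Module Set Topology
open scoped Laplacian Pointwise

section DiscreteLaplacian

variable {E ι : Type*} [NormedAddCommGroup E] [Fintype ι]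

section
variable [NormedSpace ℝ E]

/-- The discrete Laplacian of `f` at `x` with step `t` along the directions `e`: the sum of the
second-order central differences of `f`, without the normalisation `t⁻²`. -/
def discreteLaplacian (e : ι → E) (t : ℝ) (f : E → ℝ) (x : E) : ℝ :=
  ∑ i, (f (x + t • e i) + f (x - t • e i) - 2 * f x)

variable {F : Type*} [NormedAddCommGroup F] [NormedSpace ℝ F]

lemma hasDerivAt_comp_add_smul {u : E → F} {x e : E} {s : ℝ}
    (hu : DifferentiableAt ℝ u (x + s • e)) :
    HasDerivAt (fun s : ℝ ↦ u (x + s • e)) (fderiv ℝ u (x + s • e) e) s := by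
  have hline : HasDerivAt (fun s : ℝ ↦ x + s • e) e s := by
    simpa using ((hasDerivAt_id s).smul_const e).const_add x
  exact hu.hasFDerivAt.comp_hasDerivAt s hline

lemma hasDerivAt_fderiv_comp_add_smul {u : E → F} {x e : E} {s : ℝ}
    (hu : ContDiffAt ℝ 2 u (x + s • e)) :
    HasDerivAt (fun s : ℝ ↦ fderiv ℝ u (x + s • e) e)
      (iteratedFDeriv ℝ 2 u (x + s • e) ![e, e]) s := by
  have hfderiv : DifferentiableAt ℝ (fderiv ℝ u) (x + s • e) :=
    (hu.fderiv_right (m := 1) (by norm_num)).differentiableAt one_ne_zero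
  exact ((hasDerivAt_comp_add_smul hfderiv).clm_apply (hasDerivAt_const s e)).congr_deriv
    (by simp [iteratedFDeriv_two_apply])

lemma add_neg_lt_two_mul_of_hasDerivAt_neg {m m' m'' : ℝ → ℝ} {t : ℝ} (ht : 0 < t)
    (hm : ∀ s ∈ Icc (-t) t, HasDerivAt m (m' s) s)
    (hm' : ∀ s ∈ Icc (-t) t, HasDerivAt m' (m'' s) s) (hneg : ∀ s ∈ Icc (-t) t, m'' s < 0) :
    m t + m (-t) < 2 * m 0 := by
  have hanti : StrictAntiOn m' (Icc (-t) t) := by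
    refine strictAntiOn_of_deriv_neg (convex_Icc _ _)
      (fun s hs ↦ (hm' s hs).continuousAt.continuousWithinAt) fun s hs ↦ ?_
    have hs' := interior_subset hs
    exact (hm' s hs').deriv ▸ hneg s hs'
  have hconc : StrictConcaveOn ℝ (Icc (-t) t) m := by
    refine StrictAntiOn.strictConcaveOn_of_deriv (convex_Icc _ _)
      (fun s hs ↦ (hm s hs).continuousAt.continuousWithinAt) ?_
    exact (hanti.mono interior_subset).congr fun s hs ↦ (hm s (interior_subset hs)).deriv.symm
  have hmid := hconc.2 (right_mem_Icc.2 (by linarith)) (left_mem_Icc.2 (by linarith))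
    (by linarith : t ≠ -t) one_half_pos one_half_pos (add_halves 1)
  simp only [smul_eq_mul, mul_neg, add_neg_cancel] at hmid
  linarith

lemma discreteLaplacian_neg_of_sum_iteratedFDeriv_neg {e : ι → E} {t : ℝ} {u : E → ℝ} {x : E}
    (ht : 0 < t) (hu : ∀ s ∈ Icc (-t) t, ∀ i, ContDiffAt ℝ 2 u (x + s • e i))
    (hneg : ∀ s ∈ Icc (-t) t, ∑ i, iteratedFDeriv ℝ 2 u (x + s • e i) ![e i, e i] < 0) :
    discreteLaplacian e t u x < 0 := by
  have hlt := add_neg_lt_two_mul_of_hasDerivAt_neg ht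
    (fun s hs ↦ HasDerivAt.fun_sum fun i _ ↦
      hasDerivAt_comp_add_smul ((hu s hs i).differentiableAt two_ne_zero))
    (fun s hs ↦ HasDerivAt.fun_sum fun i _ ↦ hasDerivAt_fderiv_comp_add_smul (hu s hs i)) hneg
  simp only [neg_smul, ← sub_eq_add_neg, zero_smul, add_zero] at hlt
  rw [discreteLaplacian, Finset.sum_sub_distrib, Finset.sum_add_distrib, ← Finset.mul_sum]
  linarith

lemma eventually_discreteLaplacian_nonneg_of_isLocalMin {f : E → ℝ} {x : E}
    (hf : IsLocalMin f x) (e : ι → E) : ∀ᶠ t in 𝓝 (0 : ℝ), 0 ≤ discreteLaplacian e t f x := by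
  have hadd : ∀ᶠ t in 𝓝 (0 : ℝ), ∀ i, f x ≤ f (x + t • e i) := eventually_all.2 fun i ↦
    ((by fun_prop : Continuous fun t : ℝ ↦ x + t • e i).tendsto' 0 x (by simp)).eventually hf
  have hsub : ∀ᶠ t in 𝓝 (0 : ℝ), ∀ i, f x ≤ f (x - t • e i) := eventually_all.2 fun i ↦
    ((by fun_prop : Continuous fun t : ℝ ↦ x - t • e i).tendsto' 0 x (by simp)).eventually hf
  filter_upwards [hadd, hsub] with t ht ht'
  exact Finset.sum_nonneg fun i _ ↦ by linarith [ht i, ht' i]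

lemma tendsto_add_smul_nhds (x e : E) :
    Tendsto (fun z : ℝ × E ↦ z.2 + z.1 • e) (𝓝 (0, x)) (𝓝 x) := by
  have hcont : Continuous fun z : ℝ × E ↦ z.2 + z.1 • e := by fun_prop
  simpa using hcont.tendsto (0, x)

lemma eventually_discreteLaplacian_le_of_touching {K : Set E} {f u : E → ℝ} (hK : IsCompact K)
    (hle : ∀ᶠ y in 𝓝ˢ K, f y ≤ u y) (heq : EqOn f u K) (e : ι → E) :
    ∀ᶠ t in 𝓝 (0 : ℝ), ∀ x ∈ K, discreteLaplacian e t f x ≤ discreteLaplacian e t u x := by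
  have hshift : ∀ᶠ t in 𝓝 (0 : ℝ), ∀ x ∈ K, ∀ i, f (x + t • e i) ≤ u (x + t • e i) :=
    hK.eventually_forall_of_forall_eventually fun x hx ↦ eventually_all.2 fun i ↦
      (tendsto_add_smul_nhds x (e i)).eventually (eventually_nhdsSet_iff_forall.1 hle x hx)
  have hshift_neg : ∀ᶠ t in 𝓝 (0 : ℝ), ∀ x ∈ K, ∀ i, f (x + -t • e i) ≤ u (x + -t • e i) :=
    (continuous_neg.tendsto' (0 : ℝ) 0 neg_zero).eventually hshift
  filter_upwards [hshift, hshift_neg] with t ht ht' x hx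
  refine Finset.sum_le_sum fun i _ ↦ ?_
  have hadd := ht x hx i
  have hsub := ht' x hx i
  rw [neg_smul, ← sub_eq_add_neg] at hsub
  rw [heq hx]
  linarith

end

section
variable [InnerProductSpace ℝ E] [FiniteDimensional ℝ E]

lemma eventually_discreteLaplacian_neg_of_laplacian_neg {K : Set E} {u : E → ℝ}
    (hK : IsCompact K) (hu : ∀ x ∈ K, ContDiffAt ℝ 2 u x) (hΔ : ∀ x ∈ K, Δ u x < 0)
    (b : OrthonormalBasis ι ℝ E) :
    ∀ᶠ t in 𝓝[>] (0 : ℝ), ∀ x ∈ K, discreteLaplacian b t u x < 0 := by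
  have hsmooth : ∀ᶠ s in 𝓝 (0 : ℝ), ∀ x ∈ K, ∀ i, ContDiffAt ℝ 2 u (x + s • b i) :=
    hK.eventually_forall_of_forall_eventually fun x hx ↦ eventually_all.2 fun i ↦
      (tendsto_add_smul_nhds x (b i)).eventually ((hu x hx).eventually (by simp))
  have hneg : ∀ᶠ s in 𝓝 (0 : ℝ), ∀ x ∈ K,
      ∑ i, iteratedFDeriv ℝ 2 u (x + s • b i) ![b i, b i] < 0 := by
    refine hK.eventually_forall_of_forall_eventually fun x hx ↦ ?_
    have hcont : ContinuousAt (iteratedFDeriv ℝ 2 u) x :=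
      ((hu x hx).iteratedFDeriv_right (m := 0) (by norm_num)).continuousAt
    have htendsto : Tendsto
        (fun z : ℝ × E ↦ ∑ i, iteratedFDeriv ℝ 2 u (z.2 + z.1 • b i) ![b i, b i])
        (𝓝 (0, x)) (𝓝 (∑ i, iteratedFDeriv ℝ 2 u x ![b i, b i])) :=
      tendsto_finsetSum _ fun i _ ↦
        ((ContinuousMultilinearMap.apply ℝ (fun _ : Fin 2 ↦ E) ℝ ![b i, b i]).continuous.tendsto
          _).comp (hcont.tendsto.comp (tendsto_add_smul_nhds x (b i)))
    refine htendsto.eventually_lt_const ?_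
    simpa only [laplacian_eq_iteratedFDeriv_orthonormalBasis u b] using hΔ x hx
  obtain ⟨δ, hδ, H⟩ := eventually_nhds_iff_ball.1 (hsmooth.and hneg)
  filter_upwards [Ioo_mem_nhdsGT hδ] with t ht x hx
  have hball : ∀ s ∈ Icc (-t) t, s ∈ ball (0 : ℝ) δ := fun s hs ↦
    mem_ball_zero_iff.2 ((abs_le.2 hs).trans_lt ht.2)
  exact discreteLaplacian_neg_of_sum_iteratedFDeriv_neg ht.1
    (fun s hs ↦ (H s (hball s hs)).1 x hx) fun s hs ↦ (H s (hball s hs)).2 x hx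

lemma eventually_discreteLaplacian_neg_of_touching {K : Set E} {f u : E → ℝ} (hK : IsCompact K)
    (hu : ∀ x ∈ K, ContDiffAt ℝ 2 u x) (hΔ : ∀ x ∈ K, Δ u x < 0)
    (hle : ∀ᶠ y in 𝓝ˢ K, f y ≤ u y) (heq : EqOn f u K) (b : OrthonormalBasis ι ℝ E) :
    ∀ᶠ t in 𝓝[>] (0 : ℝ), ∀ x ∈ K, discreteLaplacian b t f x < 0 := by
  filter_upwards [eventually_discreteLaplacian_neg_of_laplacian_neg hK hu hΔ b,
    nhdsWithin_le_nhds (eventually_discreteLaplacian_le_of_touching hK hle heq b)]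
    with t hneg hle x hx
  exact (hle x hx).trans_lt (hneg x hx)

end

end DiscreteLaplacian

section TranslatedIntegral

lemma setIntegral_neg_of_forall_neg {α : Type*} [MeasurableSpace α] {μ : Measure α} {K : Set α}
    {h : α → ℝ} (hK : MeasurableSet K) (hμK : μ K ≠ 0) (hint : IntegrableOn h K μ)
    (hneg : ∀ v ∈ K, h v < 0) : ∫ v in K, h v ∂μ < 0 := by
  have hpos : 0 < ∫ v in K, -h v ∂μ := by
    refine (setIntegral_pos_iff_support_of_nonneg_ae ?_ hint.neg).2 ?_
    · filter_upwards [ae_restrict_mem hK] with v hv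
      exact neg_nonneg.2 (hneg v hv).le
    · exact (pos_iff_ne_zero.2 hμK).trans_le
        (measure_mono fun v hv ↦ ⟨neg_ne_zero.2 (hneg v hv).ne, hv⟩)
  rwa [integral_neg, neg_pos] at hpos

section

variable {E ι : Type*} [NormedAddCommGroup E] [NormedSpace ℝ E] [MeasurableSpace E] [Fintype ι]
  {μ : Measure E} {f : E → ℝ} {e : ι → E} {t : ℝ}

lemma integrable_discreteLaplacian (hf : Integrable f μ)
    (hadd : ∀ i, Integrable (fun v ↦ f (v + t • e i)) μ)
    (hsub : ∀ i, Integrable (fun v ↦ f (v - t • e i)) μ) :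
    Integrable (discreteLaplacian e t f) μ :=
  integrable_finsetSum _ fun i _ ↦ ((hadd i).add (hsub i)).sub (hf.const_mul 2)

lemma discreteLaplacian_integral_comp_sub (hf : Integrable f μ)
    (hadd : ∀ i, Integrable (fun v ↦ f (v + t • e i)) μ)
    (hsub : ∀ i, Integrable (fun v ↦ f (v - t • e i)) μ) :
    discreteLaplacian e t (fun x ↦ ∫ v, f (v - x) ∂μ) 0 = ∫ v, discreteLaplacian e t f v ∂μ := by
  have hsum (i : ι) : Integrable (fun v ↦ f (v + t • e i) + f (v - t • e i)) μ :=
    (hadd i).add (hsub i)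
  have hdiff (i : ι) : Integrable (fun v ↦ f (v + t • e i) + f (v - t • e i) - 2 * f v) μ :=
    (hsum i).sub (hf.const_mul 2)
  simp only [discreteLaplacian]
  rw [integral_finsetSum _ fun i _ ↦ hdiff i]
  refine Finset.sum_congr rfl fun i _ ↦ ?_
  rw [integral_sub (hsum i) (hf.const_mul 2), integral_add (hadd i) (hsub i), integral_const_mul]
  simp only [zero_add, zero_sub, sub_neg_eq_add, sub_zero]
  ring

end

variable {E ι : Type*} [NormedAddCommGroup E] [MeasurableSpace E] [BorelSpace E]
  {μ : Measure E} {f : E → ℝ} {K U : Set E}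

lemma eventually_integrableOn_comp_sub (hK : IsCompact K) (hμK : μ K ≠ ⊤) (hU : IsOpen U)
    (hKU : K ⊆ U) (hf : ContinuousOn f U) :
    ∀ᶠ x in 𝓝 (0 : E), IntegrableOn (fun v ↦ f (v - x)) K μ := by
  have hmaps : ∀ᶠ x in 𝓝 (0 : E), ∀ v ∈ K, v - x ∈ U := by
    refine hK.eventually_forall_of_forall_eventually fun v hv ↦ ?_
    have hcont : Continuous fun z : E × E ↦ z.2 - z.1 := by fun_prop
    exact (hcont.tendsto' (0, v) v (sub_zero v)).eventually (hU.mem_nhds (hKU hv))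
  filter_upwards [hmaps] with x hx
  exact (hf.comp (by fun_prop) hx).integrableOn_of_subset_isCompact hK
    hK.measurableSet subset_rfl hμK

lemma not_isLocalMin_setIntegral_comp_sub [NormedSpace ℝ E] [Fintype ι] (hK : IsCompact K)
    (hμK : μ K ≠ 0) (hμK' : μ K ≠ ⊤) (hU : IsOpen U) (hKU : K ⊆ U) (hf : ContinuousOn f U)
    {e : ι → E}
    (hneg : ∀ᶠ t in 𝓝[>] (0 : ℝ), ∀ v ∈ K, discreteLaplacian e t f v < 0) :
    ¬ IsLocalMin (fun x ↦ ∫ v in K, f (v - x) ∂μ) 0 := by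
  intro hmin
  have hint := eventually_integrableOn_comp_sub hK hμK' hU hKU hf
  have hint_sub : ∀ᶠ t in 𝓝 (0 : ℝ), ∀ i, IntegrableOn (fun v ↦ f (v - t • e i)) K μ :=
    eventually_all.2 fun i ↦
      ((by fun_prop : Continuous fun t : ℝ ↦ t • e i).tendsto' 0 0 (by simp)).eventually hint
  have hint_add : ∀ᶠ t in 𝓝 (0 : ℝ), ∀ i, IntegrableOn (fun v ↦ f (v + t • e i)) K μ := by
    simpa only [neg_smul, sub_neg_eq_add] using
      (continuous_neg.tendsto' (0 : ℝ) 0 neg_zero).eventually hint_sub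
  have hint_zero : IntegrableOn f K μ := by simpa only [sub_zero] using hint.self_of_nhds
  obtain ⟨t, hneg, hnonneg, hsub, hadd⟩ := (hneg.and (nhdsWithin_le_nhds
    ((eventually_discreteLaplacian_nonneg_of_isLocalMin hmin e).and
      (hint_sub.and hint_add)))).exists
  rw [discreteLaplacian_integral_comp_sub hint_zero hadd hsub] at hnonneg
  exact hnonneg.not_gt (setIntegral_neg_of_forall_neg hK.measurableSet hμK
    (integrable_discreteLaplacian hint_zero hadd hsub) hneg)

end TranslatedIntegral

section LaplacianOfRadial
variable {E : Type*} [NormedAddCommGroup E] [InnerProductSpace ℝ E]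

lemma iteratedFDeriv_two_comp_norm_sq {w : ℝ → ℝ} {x : E} (hw : ContDiffAt ℝ 2 w (‖x‖ ^ 2))
    (e : E) :
    iteratedFDeriv ℝ 2 (fun y ↦ w (‖y‖ ^ 2)) x ![e, e] =
      4 * ⟪x, e⟫_ℝ ^ 2 * deriv (deriv w) (‖x‖ ^ 2) + 2 * ‖e‖ ^ 2 * deriv w (‖x‖ ^ 2) := by
  have hsq (y : E) : HasFDerivAt (fun y : E ↦ ‖y‖ ^ 2) (2 • innerSL ℝ y) y :=
    (hasStrictFDerivAt_norm_sq y).hasFDerivAt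
  have hfderiv : fderiv ℝ (fun y : E ↦ w (‖y‖ ^ 2)) =ᶠ[𝓝 x]
      fun y ↦ deriv w (‖y‖ ^ 2) • (2 • innerSL ℝ y) := by
    filter_upwards [(hsq x).continuousAt.eventually (hw.eventually (by simp))] with y hy
    exact ((hy.differentiableAt two_ne_zero).hasDerivAt.comp_hasFDerivAt y (hsq y)).fderiv
  have hw' : HasDerivAt (deriv w) (deriv (deriv w) (‖x‖ ^ 2)) (‖x‖ ^ 2) :=
    ((hw.derivWithin (m := 1) (by norm_num)).differentiableAt one_ne_zero).hasDerivAt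
  have hcoeff : HasFDerivAt (fun y : E ↦ deriv w (‖y‖ ^ 2))
      (deriv (deriv w) (‖x‖ ^ 2) • (2 • innerSL ℝ x)) x :=
    HasDerivAt.comp_hasFDerivAt (h₂ := deriv w) x hw' (hsq x)
  have hdir : HasFDerivAt (fun y : E ↦ 2 • innerSL ℝ y) (2 • innerSL ℝ (E := E)) x :=
    (innerSL ℝ).hasFDerivAt.const_smul 2
  rw [iteratedFDeriv_two_apply, hfderiv.fderiv_eq, (hcoeff.fun_smul hdir).fderiv]
  simp only [Matrix.cons_val_zero, Matrix.cons_val_one, add_apply, smul_apply,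
    ContinuousLinearMap.smulRight_apply, innerSL_apply_apply]
  rw [innerSL_apply_apply, real_inner_self_eq_norm_sq]
  ring

lemma laplacian_comp_norm_sq [FiniteDimensional ℝ E] {w : ℝ → ℝ} {x : E}
    (hw : ContDiffAt ℝ 2 w (‖x‖ ^ 2)) :
    Δ (fun y : E ↦ w (‖y‖ ^ 2)) x =
      4 * ‖x‖ ^ 2 * deriv (deriv w) (‖x‖ ^ 2) + 2 * finrank ℝ E * deriv w (‖x‖ ^ 2) := by
  let b := stdOrthonormalBasis ℝ E
  have hparseval : ∑ i, ⟪x, b i⟫_ℝ ^ 2 = ‖x‖ ^ 2 := by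
    simpa only [real_inner_comm x, Real.norm_eq_abs, sq_abs] using b.sum_sq_norm_inner_right x
  simp only [laplacian_eq_iteratedFDeriv_orthonormalBasis _ b, iteratedFDeriv_two_comp_norm_sq hw,
    b.norm_eq_one, Finset.sum_add_distrib, ← Finset.sum_mul, ← Finset.mul_sum, hparseval,
    Finset.sum_const, Finset.card_univ, Fintype.card_fin, nsmul_eq_mul]
  ring

lemma laplacian_add_sub_mul_norm_sq_neg [Nontrivial E] [FiniteDimensional ℝ E] {f : E → ℝ} {x : E}
    {ε : ℝ} (hf : HarmonicAt f x) (hε : 0 < ε) (c : ℝ) :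
    Δ (f + fun y : E ↦ c - ε * ‖y‖ ^ 2) x < 0 := by
  have hsmooth : ContDiffAt ℝ 2 (fun y : E ↦ c - ε * ‖y‖ ^ 2) x :=
    contDiffAt_const.sub (contDiffAt_const.mul (contDiff_norm_sq ℝ).contDiffAt)
  have hderiv : deriv (fun s : ℝ ↦ c - ε * s) = fun _ ↦ -ε := by
    ext s
    simp
  have hquad : Δ (fun y : E ↦ c - ε * ‖y‖ ^ 2) x = -(2 * finrank ℝ E * ε) := by
    rw [laplacian_comp_norm_sq (w := fun s ↦ c - ε * s) (by fun_prop), hderiv, deriv_const]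
    ring
  have hfinrank : (0 : ℝ) < finrank ℝ E := Nat.cast_pos.2 finrank_pos
  rw [hf.1.laplacian_add hsmooth, hf.2.self_of_nhds, hquad, Pi.zero_apply, zero_add, neg_lt_zero]
  positivity

end LaplacianOfRadial

section RadialPotential

/-- The radial fundamental harmonic function of a space of dimension `n`, as a function of the
squared norm and up to affine normalisation: `radialPotential n (‖x‖ ^ 2)` is an affine function
of `log ‖x‖` if `n = 2` and of `‖x‖ ^ (2 - n)` otherwise. Defining it as a primitive of
`u ^ (-n / 2)` avoids this case distinction. -/
noncomputable def radialPotential (n : ℕ) (s : ℝ) : ℝ :=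
  ∫ u in (1 : ℝ)..s, u ^ (-(n / 2 : ℝ))

lemma hasDerivAt_radialPotential (n : ℕ) {s : ℝ} (hs : 0 < s) :
    HasDerivAt (radialPotential n) (s ^ (-(n / 2 : ℝ))) s := by
  have hcont : ContinuousOn (fun u : ℝ ↦ u ^ (-(n / 2 : ℝ))) (Ioi 0) := fun u hu ↦
    (Real.continuousAt_rpow_const u _ (Or.inl (mem_Ioi.1 hu).ne')).continuousWithinAt
  refine intervalIntegral.integral_hasDerivAt_right ?_ ?_ (hcont.continuousAt (Ioi_mem_nhds hs))
  · exact (hcont.mono fun u hu ↦ (lt_min one_pos hs).trans_le hu.1).intervalIntegrable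
  · exact hcont.stronglyMeasurableAtFilter isOpen_Ioi s hs

lemma strictMonoOn_radialPotential (n : ℕ) : StrictMonoOn (radialPotential n) (Ioi 0) := by
  refine strictMonoOn_of_deriv_pos (convex_Ioi 0)
    (fun s hs ↦ (hasDerivAt_radialPotential n hs).continuousAt.continuousWithinAt) fun s hs ↦ ?_
  rw [interior_Ioi] at hs
  rw [(hasDerivAt_radialPotential n hs).deriv]
  exact Real.rpow_pos_of_pos hs _

lemma contDiffOn_radialPotential (n : ℕ) : ContDiffOn ℝ 2 (radialPotential n) (Ioi 0) := by
  refine (contDiffOn_succ_iff_deriv_of_isOpen (n := 1) isOpen_Ioi).2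
    ⟨fun s hs ↦ (hasDerivAt_radialPotential n hs).differentiableAt.differentiableWithinAt,
      by simp, ?_⟩
  refine ContDiffOn.congr (f := fun s ↦ s ^ (-(n / 2 : ℝ))) (fun s hs ↦
    (Real.contDiffAt_rpow_const_of_ne (mem_Ioi.1 hs).ne').contDiffWithinAt)
    fun s hs ↦ (hasDerivAt_radialPotential n hs).deriv

lemma radialPotential_ode (n : ℕ) {s : ℝ} (hs : 0 < s) :
    2 * s * deriv (deriv (radialPotential n)) s + n * deriv (radialPotential n) s = 0 := by
  have hderiv : deriv (radialPotential n) =ᶠ[𝓝 s] fun u ↦ u ^ (-(n / 2 : ℝ)) := by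
    filter_upwards [Ioi_mem_nhds hs] with u hu
    exact (hasDerivAt_radialPotential n hu).deriv
  rw [hderiv.deriv_eq, hderiv.self_of_nhds, Real.deriv_rpow_const, Real.rpow_sub_one hs.ne']
  field_simp
  ring

variable (E : Type*) [NormedAddCommGroup E] [InnerProductSpace ℝ E] [FiniteDimensional ℝ E]

lemma harmonicOnNhd_radialPotential_norm_sq :
    HarmonicOnNhd (fun x : E ↦ radialPotential (finrank ℝ E) (‖x‖ ^ 2)) {0}ᶜ := by
  have hsmooth {x : E} (hx : x ≠ 0) :
      ContDiffAt ℝ 2 (radialPotential (finrank ℝ E)) (‖x‖ ^ 2) :=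
    (contDiffOn_radialPotential _).contDiffAt (Ioi_mem_nhds (by positivity))
  intro x hx
  refine ⟨(hsmooth hx).comp x (contDiff_norm_sq ℝ).contDiffAt, ?_⟩
  filter_upwards [isOpen_compl_singleton.mem_nhds hx] with y hy
  have hode := radialPotential_ode (finrank ℝ E) (pow_pos (norm_pos_iff.2 hy) 2)
  rw [laplacian_comp_norm_sq (hsmooth hy), Pi.zero_apply]
  linear_combination 2 * hode

lemma exists_radial_harmonicOnNhd_eq {p r : ℝ} (hp : 0 < p) (hpr : p < r) (α β : ℝ) :
    ∃ h : ℝ → ℝ, ContinuousOn h (Ioi 0) ∧ HarmonicOnNhd (fun x : E ↦ h ‖x‖) {0}ᶜ ∧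
      h p = α ∧ h r = β := by
  set P : ℝ → ℝ := fun s ↦ radialPotential (finrank ℝ E) (s ^ 2)
  have hP : ContinuousOn P (Ioi 0) :=
    (contDiffOn_radialPotential _).continuousOn.comp (by fun_prop)
      fun s hs ↦ mem_Ioi.2 (pow_pos hs 2)
  have hlt : P p < P r := strictMonoOn_radialPotential _ (pow_pos hp 2)
    (pow_pos (hp.trans hpr) 2) (pow_lt_pow_left₀ hpr hp.le two_ne_zero)
  set b := (β - α) / (P r - P p)
  refine ⟨fun s ↦ (α - b * P p) + b * P s, by fun_prop, ?_, by ring, ?_⟩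
  · exact (harmonicOnNhd_const _).add (harmonicOnNhd_radialPotential_norm_sq E).const_smul
  · have hb : b * (P r - P p) = β - α := div_mul_cancel₀ _ (sub_pos.2 hlt).ne'
    linear_combination hb

end RadialPotential

section SphericalIntegral

variable {E : Type*} [NormedAddCommGroup E] [MeasurableSpace E]

/-- The integral of the radial kernel `g ‖x - v‖` over `v` in the sphere of radius `R` about the
origin, as a function of `x`. The measure `μ` is a parameter, to be thought of as the surface
measure of that sphere. -/
noncomputable def sphericalIntegral (μ : Measure E) (g : ℝ → ℝ) (R : ℝ) (x : E) : ℝ :=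
  ∫ v in sphere 0 R, g ‖x - v‖ ∂μ

lemma sphericalIntegral_neg (μ : Measure E) (g : ℝ → ℝ) (R : ℝ) :
    sphericalIntegral μ (-g) R = -sphericalIntegral μ g R :=
  funext fun _ ↦ integral_neg _

variable [InnerProductSpace ℝ E] [FiniteDimensional ℝ E] [BorelSpace E] {g h : ℝ → ℝ}

lemma not_isLocalMin_sphericalIntegral_of_touching {μ : Measure E} {u : E → ℝ} {R : ℝ}
    (hR : 0 < R) (hμ₀ : μ (sphere 0 R) ≠ 0) (hμ : μ (sphere 0 R) ≠ ⊤)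
    (hg : ContinuousOn g (Ioi 0)) (hu : ∀ x ∈ sphere (0 : E) R, ContDiffAt ℝ 2 u x)
    (hΔ : ∀ x ∈ sphere (0 : E) R, Δ u x < 0)
    (hle : ∀ᶠ y in 𝓝ˢ (sphere (0 : E) R), g ‖y‖ ≤ u y)
    (heq : EqOn (fun y ↦ g ‖y‖) u (sphere 0 R)) :
    ¬ IsLocalMin (sphericalIntegral μ g R) 0 := by
  have hcont : ContinuousOn (fun y : E ↦ g ‖y‖) {0}ᶜ :=
    hg.comp continuous_norm.continuousOn fun y hy ↦ norm_pos_iff.2 hy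
  have hsphere : sphere (0 : E) R ⊆ {0}ᶜ := fun v hv ↦ ne_of_mem_sphere hv hR.ne'
  have hneg := eventually_discreteLaplacian_neg_of_touching (isCompact_sphere 0 R) hu hΔ hle heq
    (stdOrthonormalBasis ℝ E)
  simpa only [norm_sub_rev] using! not_isLocalMin_setIntegral_comp_sub (isCompact_sphere 0 R)
    hμ₀ hμ isOpen_compl_singleton hsphere hcont hneg

lemma not_isLocalMax_sub_add_mul_sq {μ : Measure E} {R ε : ℝ} (hR : 0 < R) (hε : 0 < ε)
    (hμ₀ : μ (sphere 0 R) ≠ 0) (hμ : μ (sphere 0 R) ≠ ⊤) (hg : ContinuousOn g (Ioi 0))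
    (hmin : IsLocalMin (sphericalIntegral μ g R) 0)
    (hh : HarmonicOnNhd (fun x : E ↦ h ‖x‖) {0}ᶜ) :
    ¬ IsLocalMax (fun s ↦ g s - h s + ε * s ^ 2) R := by
  intro hmax
  have hne {v : E} (hv : v ∈ sphere 0 R) : v ≠ 0 := ne_of_mem_sphere hv hR.ne'
  obtain ⟨v, hv⟩ := nonempty_of_measure_ne_zero hμ₀
  have : Nontrivial E := nontrivial_of_ne v 0 (hne hv)
  set c := g R - h R + ε * R ^ 2
  refine not_isLocalMin_sphericalIntegral_of_touching hR hμ₀ hμ hg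
    (u := (fun y ↦ h ‖y‖) + fun y ↦ c - ε * ‖y‖ ^ 2) (fun x hx ↦ ?_)
    (fun x hx ↦ laplacian_add_sub_mul_norm_sq_neg (hh x (hne hx)) hε c) ?_ (fun y hy ↦ ?_) hmin
  · exact (hh x (hne hx)).1.add
      (contDiffAt_const.sub (contDiffAt_const.mul (contDiff_norm_sq ℝ).contDiffAt))
  · refine eventually_nhdsSet_iff_forall.2 fun x hx ↦ ?_
    have hnorm : Tendsto (fun y : E ↦ ‖y‖) (𝓝 x) (𝓝 R) :=
      continuous_norm.tendsto' x R (mem_sphere_zero_iff_norm.1 hx)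
    filter_upwards [hnorm.eventually hmax] with y hy
    simp only [Pi.add_apply]
    linarith
  · simp only [Pi.add_apply, mem_sphere_zero_iff_norm.1 hy, c]
    ring

lemma le_of_isLocalMin_sphericalIntegral {μ : ℝ → Measure E}
    (hμ₀ : ∀ R > 0, μ R (sphere 0 R) ≠ 0) (hμ : ∀ R > 0, μ R (sphere 0 R) ≠ ⊤)
    (hg : ContinuousOn g (Ioi 0))
    (hmin : ∀ R > 0, IsLocalMin (sphericalIntegral (μ R) g R) 0)
    (hh : HarmonicOnNhd (fun x : E ↦ h ‖x‖) {0}ᶜ) (hhcont : ContinuousOn h (Ioi 0))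
    {p r s : ℝ} (hp : 0 < p) (hs : s ∈ Icc p r) (hgp : g p ≤ h p) (hgr : g r ≤ h r) :
    g s ≤ h s := by
  by_contra! hlt
  have hr : 0 < r := hp.trans_le (hs.1.trans hs.2)
  set ε := (g s - h s) / (2 * r ^ 2)
  have hε : 0 < ε := div_pos (sub_pos.2 hlt) (by positivity)
  have hεr : ε * r ^ 2 = (g s - h s) / 2 := by
    simp only [ε]
    field_simp
  have hboundary : ∀ q ∈ Icc p r \ Ioo p r,
      g q - h q + ε * q ^ 2 < g s - h s + ε * s ^ 2 := by
    intro q hq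
    have hgq : g q ≤ h q := by
      rw [Icc_sdiff_Ioo_same (hs.1.trans hs.2)] at hq
      rcases hq with rfl | rfl
      exacts [hgp, hgr]
    have hεq : ε * q ^ 2 ≤ ε * r ^ 2 := by
      have := hp.trans_le hq.1.1
      gcongr
      exact hq.1.2
    have hεs : 0 ≤ ε * s ^ 2 := by positivity
    linarith
  have hcont : ContinuousOn (fun s ↦ g s - h s + ε * s ^ 2) (Icc p r) :=
    ((hg.sub hhcont).add (by fun_prop)).mono fun q hq ↦ hp.trans_le hq.1
  obtain ⟨R, hR, hmax⟩ :=
    isCompact_Icc.exists_isLocalMax_mem_open Ioo_subset_Icc_self hcont hs hboundary isOpen_Ioo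
  have hR₀ : 0 < R := hp.trans hR.1
  exact not_isLocalMax_sub_add_mul_sq hR₀ hε (hμ₀ R hR₀) (hμ R hR₀) hg (hmin R hR₀) hh hmax

theorem harmonic_of_spherical_mean_independent_general {μ : ℝ → Measure E}
    (hμ₀ : ∀ R > 0, μ R (sphere 0 R) ≠ 0) (hμ : ∀ R > 0, μ R (sphere 0 R) ≠ ⊤)
    (hg : ContinuousOn g (Ioi 0))
    (hind : ∀ R > 0, ∀ᶠ x in 𝓝 0,
      sphericalIntegral (μ R) g R x = sphericalIntegral (μ R) g R 0) :
    HarmonicOnNhd (fun x : E ↦ g ‖x‖) {0}ᶜ := by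
  intro x hx
  have hxpos : 0 < ‖x‖ := norm_pos_iff.2 hx
  obtain ⟨h, hhcont, hh, hleft, hright⟩ := exists_radial_harmonicOnNhd_eq E
    (half_pos hxpos) (by linarith : ‖x‖ / 2 < 2 * ‖x‖) (g (‖x‖ / 2)) (g (2 * ‖x‖))
  have hmin (R : ℝ) (hR : R > 0) : IsLocalMin (sphericalIntegral (μ R) g R) 0 :=
    (hind R hR).mono fun _ hy ↦ hy.ge
  have hmin_neg (R : ℝ) (hR : R > 0) : IsLocalMin (sphericalIntegral (μ R) (-g) R) 0 := by
    rw [sphericalIntegral_neg]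
    exact (hind R hR).mono fun _ hy ↦ neg_le_neg hy.le
  have heq : EqOn g h (Icc (‖x‖ / 2) (2 * ‖x‖)) := fun s hs ↦ le_antisymm
    (le_of_isLocalMin_sphericalIntegral hμ₀ hμ hg hmin hh hhcont (half_pos hxpos) hs
      hleft.ge hright.ge)
    (neg_le_neg_iff.1 (le_of_isLocalMin_sphericalIntegral (g := -g) (h := -h) hμ₀ hμ hg.neg
      hmin_neg hh.neg hhcont.neg (half_pos hxpos) hs (neg_le_neg hleft.le)
      (neg_le_neg hright.le)))
  refine (harmonicAt_congr_nhds ?_).2 (hh x hx)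
  filter_upwards [continuous_norm.continuousAt.eventually
    (Icc_mem_nhds (by linarith : ‖x‖ / 2 < ‖x‖) (by linarith : ‖x‖ < 2 * ‖x‖))] with y hy
  exact heq hy

end SphericalIntegral

section HausdorffMeasureSphere

variable {E : Type*} [NormedAddCommGroup E] [InnerProductSpace ℝ E] {v : E}

lemma norm_stereoToFun_le {y : E} (hvy : ⟪v, y⟫_ℝ ≤ 0) : ‖stereoToFun v y‖ ≤ 2 * ‖y‖ := by
  have hfactor : ‖2 / (1 - ⟪v, y⟫_ℝ)‖ ≤ 2 := by
    rw [Real.norm_of_nonneg (div_nonneg zero_le_two (by linarith))]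
    exact div_le_self zero_le_two (by linarith)
  rw [stereoToFun_apply, norm_smul, innerSL_apply_apply]
  gcongr
  exact Submodule.norm_orthogonalProjectionOnto_apply_le _ y

lemma halfSphere_subset_stereoInvFunAux_image (hv : ‖v‖ = 1) :
    {y ∈ sphere (0 : E) 1 | ⟪v, y⟫_ℝ ≤ 0} ⊆
      (fun w : (ℝ ∙ v)ᗮ ↦ stereoInvFunAux v w) '' closedBall 0 2 := by
  rintro y ⟨hy, hvy⟩
  have hne : y ≠ v := by
    rintro rfl
    norm_num [hv] at hvy
  refine ⟨stereoToFun v y, ?_, congrArg Subtype.val (stereo_left_inv hv (x := ⟨y, hy⟩) hne)⟩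
  simpa only [mem_closedBall_zero_iff, mem_sphere_zero_iff_norm.1 hy, mul_one] using
    norm_stereoToFun_le hvy

lemma ball_subset_orthogonalProjectionOnto_image_sphere (hv : ‖v‖ = 1) (R : ℝ) :
    ball 0 R ⊆ (ℝ ∙ v)ᗮ.orthogonalProjectionOnto '' sphere (0 : E) R := by
  intro w hw
  have hwR : ‖w‖ < R := mem_ball_zero_iff.1 hw
  have hR : 0 ≤ R := (norm_nonneg w).trans hwR.le
  have hnonneg : 0 ≤ R ^ 2 - ‖w‖ ^ 2 :=
    sub_nonneg.2 (pow_le_pow_left₀ (norm_nonneg w) hwR.le 2)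
  have hinner : ⟪(w : E), v⟫_ℝ = 0 := Submodule.mem_orthogonal_singleton_iff_inner_left.1 w.2
  have hproj : (ℝ ∙ v)ᗮ.orthogonalProjectionOnto v = 0 :=
    Submodule.orthogonalProjectionOnto_orthogonal_apply_eq_zero
      (Submodule.mem_span_singleton_self v)
  refine ⟨w + √(R ^ 2 - ‖w‖ ^ 2) • v, ?_, by simp [hproj]⟩
  rw [mem_sphere_zero_iff_norm, ← sq_eq_sq₀ (norm_nonneg _) hR, norm_add_sq_real,
    inner_smul_right, hinner, norm_smul, hv, Real.norm_of_nonneg (Real.sqrt_nonneg _),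
      mul_one, Real.sq_sqrt hnonneg, Submodule.coe_norm]
  ring

variable {k : ℕ} [Fact (finrank ℝ E = k + 1)] [MeasurableSpace E] [BorelSpace E]

lemma hausdorffMeasure_halfSphere_lt_top (hv : ‖v‖ = 1) :
    μH[k] {y ∈ sphere (0 : E) 1 | ⟪v, y⟫_ℝ ≤ 0} < ⊤ := by
  have : FiniteDimensional ℝ E := .of_fact_finrank_eq_succ k
  have hv₀ : v ≠ 0 := norm_ne_zero_iff.1 (hv ▸ one_ne_zero)
  have hsmooth : ContDiff ℝ 1 fun w : (ℝ ∙ v)ᗮ ↦ stereoInvFunAux v w :=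
    contDiff_stereoInvFunAux.comp (ℝ ∙ v)ᗮ.subtypeL.contDiff
  obtain ⟨C, hC⟩ := hsmooth.contDiffOn.exists_lipschitzOnWith one_ne_zero
    (convex_closedBall 0 2) (isCompact_closedBall 0 2)
  calc μH[k] {y ∈ sphere (0 : E) 1 | ⟪v, y⟫_ℝ ≤ 0}
      ≤ C ^ (k : ℝ) * μH[k] (closedBall (0 : (ℝ ∙ v)ᗮ) 2) :=
        (measure_mono (halfSphere_subset_stereoInvFunAux_image hv)).trans
          (hC.hausdorffMeasure_image_le k.cast_nonneg)
    _ < ⊤ := by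
        rw [← Submodule.finrank_orthogonal_span_singleton (𝕜 := ℝ) (n := k) hv₀]
        exact ENNReal.mul_lt_top (by simp) (isCompact_closedBall 0 2).measure_lt_top

lemma hausdorffMeasure_sphere_zero_one_lt_top : μH[k] (sphere (0 : E) 1) < ⊤ := by
  have : Nontrivial E := Module.nontrivial_of_finrank_pos (R := ℝ)
    (Fact.out (p := finrank ℝ E = k + 1) ▸ k.succ_pos)
  obtain ⟨v, hv⟩ := exists_norm_eq E zero_le_one
  refine (measure_mono fun y hy ↦ ?_).trans_lt (measure_union_lt_top
    (hausdorffMeasure_halfSphere_lt_top hv) (hausdorffMeasure_halfSphere_lt_top (v := -v)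
      (by rwa [norm_neg])))
  rcases le_total (⟪v, y⟫_ℝ) 0 with h | h
  · exact Or.inl ⟨hy, h⟩
  · exact Or.inr ⟨hy, by rwa [inner_neg_left, neg_nonpos]⟩

lemma hausdorffMeasure_sphere_lt_top {R : ℝ} (hR : 0 < R) : μH[k] (sphere (0 : E) R) < ⊤ := by
  have hsphere : sphere (0 : E) R = R • sphere (0 : E) 1 := by
    rw [smul_sphere' hR.ne', smul_zero, mul_one, Real.norm_of_nonneg hR.le]
  rw [hsphere, Measure.hausdorffMeasure_smul₀ k.cast_nonneg hR.ne']
  exact ENNReal.mul_lt_top (by simp) hausdorffMeasure_sphere_zero_one_lt_top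

lemma hausdorffMeasure_sphere_pos {R : ℝ} (hR : 0 < R) : 0 < μH[k] (sphere (0 : E) R) := by
  have : FiniteDimensional ℝ E := .of_fact_finrank_eq_succ k
  have : Nontrivial E := Module.nontrivial_of_finrank_pos (R := ℝ)
    (Fact.out (p := finrank ℝ E = k + 1) ▸ k.succ_pos)
  obtain ⟨v, hv⟩ := exists_norm_eq E zero_le_one
  have hv₀ : v ≠ 0 := norm_ne_zero_iff.1 (hv ▸ one_ne_zero)
  calc 0 < μH[k] (ball (0 : (ℝ ∙ v)ᗮ) R) := by
        rw [← Submodule.finrank_orthogonal_span_singleton (𝕜 := ℝ) (n := k) hv₀]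
        exact measure_ball_pos _ 0 hR
    _ ≤ μH[k] ((ℝ ∙ v)ᗮ.orthogonalProjectionOnto '' sphere (0 : E) R) :=
        measure_mono (ball_subset_orthogonalProjectionOnto_image_sphere hv R)
    _ ≤ μH[k] (sphere (0 : E) R) :=
        hausdorffMeasure_orthogonalProjectionOnto_le _ _ _ k.cast_nonneg

end HausdorffMeasureSphere

lemma euclideanLaplacian_eq_laplacian {n : ℕ} (f : EuclideanSpace ℝ (Fin n) → ℝ) :
    euclideanLaplacian f = Δ f := by
  ext x
  simp only [euclideanLaplacian, EuclideanSpace.basisFun_apply,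
    laplacian_eq_iteratedFDeriv_orthonormalBasis f (EuclideanSpace.basisFun (Fin n) ℝ)]

/-- If for every `R > 0` the spherical integral `∫_{S^k(R)} g(‖x − v‖)` does not depend on
the point `x` inside the sphere, then `x ↦ g(‖x‖)` is harmonic away from the origin. -/
theorem harmonic_of_spherical_mean_independent
    (k : ℕ) (hk : 1 ≤ k) (g : ℝ → ℝ) (hg : ContinuousOn g (Set.Ioi 0))
    (hind : ∀ R : ℝ, 0 < R → ∀ x₁ x₂ : EuclideanSpace ℝ (Fin (k + 1)),
      ‖x₁‖ < R → ‖x₂‖ < R →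
      ∫ v in Metric.sphere (0 : EuclideanSpace ℝ (Fin (k + 1))) R, g ‖x₁ - v‖ ∂μH[k]
        = ∫ v in Metric.sphere (0 : EuclideanSpace ℝ (Fin (k + 1))) R, g ‖x₂ - v‖ ∂μH[k]) :
    ContDiffOn ℝ 2 (fun x : EuclideanSpace ℝ (Fin (k + 1)) => g ‖x‖)
        ({0}ᶜ : Set (EuclideanSpace ℝ (Fin (k + 1))))
      ∧ ∀ x : EuclideanSpace ℝ (Fin (k + 1)), x ≠ 0 →
          euclideanLaplacian (fun x => g ‖x‖) x = 0 := by
  have : Fact (finrank ℝ (EuclideanSpace ℝ (Fin (k + 1))) = k + 1) := ⟨finrank_euclideanSpace_fin⟩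
  have hharm : HarmonicOnNhd (fun x : EuclideanSpace ℝ (Fin (k + 1)) ↦ g ‖x‖) {0}ᶜ := by
    refine harmonic_of_spherical_mean_independent_general (μ := fun _ ↦ μH[k])
      (fun R hR ↦ (hausdorffMeasure_sphere_pos hR).ne')
      (fun R hR ↦ (hausdorffMeasure_sphere_lt_top hR).ne) hg fun R hR ↦ ?_
    filter_upwards [ball_mem_nhds 0 hR] with x hx
    exact hind R hR x 0 (mem_ball_zero_iff.1 hx) (by rwa [norm_zero])
  refine ⟨hharm.contDiffOn, fun x hx ↦ ?_⟩
  rw [euclideanLaplacian_eq_laplacian]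
  exact (hharm x hx).2.eq_of_nhds
end

section
/- (One Radius Theorem.) Fix ρ > 0 and an integer k ≥ 1. Let μ, ν ∈ ℂ with μ ≠ ν, and let α, β ∈ ℂ satisfy μ = (α·k − α²)/ρ² and ν = (β·k − β²)/ρ². Set p = max(|Im α|, |Im β|) and assume p > 0. Let φ_μ, φ_ν : ℝ → ℂ be normalized radial eigenfunctions on [0, ∞) with eigenvalues μ and ν respectively. Then φ_μ(r) ≠ φ_ν(r) for every r ∈ (0, πρ/(2p)]. -/
open MeasureTheory Real

/-!
By Frobenius theory the radial eigenvalue equation has a one-dimensional space of solutions with a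
finite limit at the origin; concretely, the Wronskian of two such solutions must vanish. After
rescaling to curvature `-1`, the normalized eigenfunction is therefore the spherical average of the
horocyclic wave `exp (-α B)`, where `B` is a Busemann function. Since `α` and `k - α` have the same
eigenvalue, averaging the two waves turns it into the integral of `cosh ((α - k / 2) B)` against the
positive weight `exp (-k B / 2)`.

Now `|B| ≤ r`, and `(cosh (a t) - cosh (b t)) / (a² - b²)` has positive real part as long as
`max |Im a| |Im b| * |t| ≤ π / 2`, because it is half the product of `sinh (c t) / c` and
`sinh (d t) / d` with `c = (a + b) / 2` and `d = (a - b) / 2`. Integrating, the difference of the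
two eigenfunctions, divided by the difference of the eigenvalues (in reverse order), has positive
real part.
-/

namespace OneRadius

open Set Filter Topology

/-! ### Auxiliary results on differential equations and integrals -/

lemma eqOn_zero_of_linear_second_order {𝕜 E : Type*} [NormedField 𝕜]
    [NormedAddCommGroup E] [NormedSpace ℝ E] [NormedSpace 𝕜 E] {u v : ℝ → E} {p q : ℝ → 𝕜} {a b : ℝ}
    (hp : ContinuousOn p (Icc a b)) (hq : ContinuousOn q (Icc a b))
    (hu : ∀ r ∈ Icc a b, HasDerivAt u (v r) r)
    (hv : ∀ r ∈ Icc a b, HasDerivAt v (p r • v r + q r • u r) r)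
    (hua : u a = 0) (hva : v a = 0) : EqOn u 0 (Icc a b) := by
  obtain ⟨P, hP⟩ := isCompact_Icc.exists_bound_of_continuousOn hp
  obtain ⟨Q, hQ⟩ := isCompact_Icc.exists_bound_of_continuousOn hq
  have hderiv (r) (hr : r ∈ Icc a b) := (hu r hr).prodMk (hv r hr)
  have hbound (r) (hr : r ∈ Ico a b) :
      ‖(v r, p r • v r + q r • u r)‖ ≤ (1 + P + Q) * ‖(u r, v r)‖ := by
    have hPr := hP r (Ico_subset_Icc_self hr)
    have hQr := hQ r (Ico_subset_Icc_self hr)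
    have hP0 : 0 ≤ P := (norm_nonneg _).trans hPr
    have hQ0 : 0 ≤ Q := (norm_nonneg _).trans hQr
    set n := ‖(u r, v r)‖
    have hun : ‖u r‖ ≤ n := norm_fst_le (u r, v r)
    have hvn : ‖v r‖ ≤ n := norm_snd_le (u r, v r)
    refine max_le (hvn.trans (le_mul_of_one_le_left (norm_nonneg _) (by linarith))) ?_
    calc ‖p r • v r + q r • u r‖ ≤ ‖p r‖ * ‖v r‖ + ‖q r‖ * ‖u r‖ := by
          simpa only [norm_smul] using norm_add_le (p r • v r) (q r • u r)
      _ ≤ P * n + Q * n := by gcongr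
      _ ≤ (1 + P + Q) * n := by linarith [norm_nonneg (u r, v r)]
  intro r hr
  exact congrArg Prod.fst (eq_zero_of_abs_deriv_le_mul_abs_self_of_eq_zero_right
    (fun x hx ↦ (hderiv x hx).continuousAt.continuousWithinAt)
    (fun x hx ↦ (hderiv x (Ico_subset_Icc_self hx)).hasDerivWithinAt)
    (Prod.ext hua hva) hbound r hr)

lemma not_tendsto_nhdsGT_zero_of_div_le_deriv {F F' : ℝ → ℝ} {c : ℝ} (hc : 0 < c)
    (hF : ∀ᶠ r in 𝓝[>] 0, HasDerivAt F (F' r) r) (hF' : ∀ᶠ r in 𝓝[>] 0, c / r ≤ F' r) (L : ℝ) :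
    ¬ Tendsto F (𝓝[>] 0) (𝓝 L) := by
  intro hL
  obtain ⟨d, hd, hsub⟩ := mem_nhdsGT_iff_exists_Ioo_subset.1 (hF.and hF')
  have hderiv (r) (hr : r ∈ Ioo 0 d) : HasDerivAt (fun r ↦ F r - c * log r) (F' r - c * r⁻¹) r :=
    (hsub hr).1.sub ((hasDerivAt_log hr.1.ne').const_mul c)
  have hmono : MonotoneOn (fun r ↦ F r - c * log r) (Ioo 0 d) := by
    refine monotoneOn_of_hasDerivWithinAt_nonneg (convex_Ioo 0 d) (f' := fun r ↦ F' r - c * r⁻¹)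
      (fun r hr ↦ (hderiv r hr).continuousAt.continuousWithinAt) ?_ ?_ <;> rw [interior_Ioo]
    · exact fun r hr ↦ (hderiv r hr).hasDerivWithinAt
    · exact fun r hr ↦ sub_nonneg.2 (hsub hr).2
  have htop : Tendsto (fun r ↦ F r - c * log r) (𝓝[>] 0) atTop := by
    simpa only [sub_eq_add_neg, Function.comp_def] using
      hL.add_atTop (tendsto_neg_atBot_atTop.comp (tendsto_log_nhdsGT_zero.const_mul_atBot hc))
  have hd2 : d / 2 ∈ Ioo 0 d := ⟨half_pos hd, half_lt_self hd⟩
  obtain ⟨r, hlarge, hr⟩ := ((htop.eventually_gt_atTop (F (d / 2) - c * log (d / 2))).and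
    (Ioo_mem_nhdsGT (half_pos hd))).exists
  exact hlarge.not_ge (hmono ⟨hr.1, hr.2.trans hd2.2⟩ hd2 hr.2.le)

lemma hasDerivAt_intervalIntegral_of_continuous {𝕜 E : Type*} [RCLike 𝕜] [NormedAddCommGroup E]
    [NormedSpace ℝ E] [NormedSpace 𝕜 E] {F F' : 𝕜 → ℝ → E} {a b : ℝ}
    (hF : ∀ x, Continuous (F x)) (hF' : Continuous fun p : 𝕜 × ℝ ↦ F' p.1 p.2)
    (hderiv : ∀ x t, HasDerivAt (fun x ↦ F x t) (F' x t) x) (x₀ : 𝕜) :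
    HasDerivAt (fun x ↦ ∫ t in a..b, F x t) (∫ t in a..b, F' x₀ t) x₀ := by
  obtain ⟨M, hM⟩ := ((isCompact_closedBall x₀ 1).prod
    (isCompact_uIcc (a := a) (b := b))).exists_bound_of_continuousOn hF'.continuousOn
  refine (intervalIntegral.hasDerivAt_integral_of_dominated_loc_of_deriv_le
    (bound := fun _ ↦ M) (Metric.ball_mem_nhds x₀ one_pos)
    (.of_forall fun x ↦ (hF x).aestronglyMeasurable)
    ((hF x₀).intervalIntegrable _ _) (hF'.comp (.prodMk_right x₀)).aestronglyMeasurable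
    (.of_forall fun t ht x hx ↦ ?_) intervalIntegrable_const
    (.of_forall fun t _ x _ ↦ hderiv x t)).2
  exact hM (x, t) ⟨Metric.ball_subset_closedBall hx, uIoc_subset_uIcc ht⟩

/-! ### Hyperbolic cosine in the complex plane -/

lemma max_abs_add_abs_sub (x y : ℝ) : max |x + y| |x - y| = |x| + |y| := by
  grind

lemma re_cosh (z : ℂ) : (Complex.cosh z).re = cosh z.re * cos z.im := by
  conv_lhs => rw [← Complex.re_add_im z, Complex.cosh_add, Complex.cosh_mul_I, Complex.sinh_mul_I]
  simp [← Complex.ofReal_cosh, ← Complex.ofReal_sinh, ← Complex.ofReal_cos, ← Complex.ofReal_sin]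

lemma re_cosh_pos {z : ℂ} (hz : |z.im| < π / 2) : 0 < (Complex.cosh z).re := by
  rw [re_cosh]
  exact mul_pos (cosh_pos _) (cos_pos_of_mem_Ioo (abs_lt.1 hz))

lemma re_cosh_mul_cosh_pos {c d : ℂ} (h : |c.im| + |d.im| < π / 2) :
    0 < (Complex.cosh c * Complex.cosh d).re := by
  have hsum : 0 < (Complex.cosh (c + d)).re := re_cosh_pos ((abs_add_le _ _).trans_lt h)
  have hdiff : 0 < (Complex.cosh (c - d)).re := re_cosh_pos ((abs_sub _ _).trans_lt h)
  rw [Complex.cosh_add, Complex.add_re] at hsum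
  rw [Complex.cosh_sub, Complex.sub_re] at hdiff
  linarith

lemma re_mul_sinh_div_pos {w c : ℂ} (hc : c ≠ 0) {t : ℝ} (ht : 0 < t)
    (h : ∀ s ∈ Ioo 0 t, 0 < (w * Complex.cosh (c * s)).re) :
    0 < (w * (Complex.sinh (c * t) / c)).re := by
  have hderiv (s : ℝ) : HasDerivAt (fun s : ℝ ↦ (w * (Complex.sinh (c * s) / c)).re)
      (w * Complex.cosh (c * s)).re s := by
    refine HasDerivAt.real_of_complex (e := fun z ↦ w * (Complex.sinh (c * z) / c)) ?_
    refine ((((hasDerivAt_id (s : ℂ)).const_mul c).csinh.div_const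
      c).const_mul w).congr_deriv ?_
    rw [mul_one, mul_div_cancel_right₀ _ hc, id]
  have hmono : StrictMonoOn (fun s : ℝ ↦ (w * (Complex.sinh (c * s) / c)).re) (Icc 0 t) := by
    refine strictMonoOn_of_hasDerivWithinAt_pos (convex_Icc 0 t)
      (fun s _ ↦ (hderiv s).continuousAt.continuousWithinAt)
      (fun s _ ↦ (hderiv s).hasDerivWithinAt) ?_
    simpa only [interior_Icc] using h
  simpa using hmono (left_mem_Icc.2 ht.le) (right_mem_Icc.2 ht.le) ht

lemma re_sinh_div_mul_sinh_div_pos {c d : ℂ} (hc : c ≠ 0) (hd : d ≠ 0) {t : ℝ} (ht : 0 < t)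
    (h : (|c.im| + |d.im|) * t ≤ π / 2) :
    0 < (Complex.sinh (c * t) / c * (Complex.sinh (d * t) / d)).re := by
  -- `sinh (c t) / c = ∫₀ᵗ cosh (c s) ds`, so it suffices that `cosh (c s) cosh (d u)` has positive
  -- real part for `s, u < t`.
  have hcosh (s) (hs : s ∈ Ioo 0 t) (u) (hu : u ∈ Ioo 0 t) :
      0 < (Complex.cosh (d * u) * Complex.cosh (c * s)).re := by
    refine re_cosh_mul_cosh_pos ?_
    simp only [Complex.im_mul_ofReal, abs_mul, abs_of_pos hs.1, abs_of_pos hu.1]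
    rcases (add_nonneg (abs_nonneg c.im) (abs_nonneg d.im)).eq_or_lt with h0 | h0
    · have hc0 : |c.im| = 0 := by linarith [abs_nonneg c.im, abs_nonneg d.im]
      have hd0 : |d.im| = 0 := by linarith
      simp [hc0, hd0, pi_pos]
    · calc |d.im| * u + |c.im| * s ≤ (|c.im| + |d.im|) * max s u := by
            rw [add_mul, add_comm]; gcongr <;> simp
        _ < (|c.im| + |d.im|) * t := by gcongr; exact max_lt hs.2 hu.2
        _ ≤ π / 2 := h
  refine re_mul_sinh_div_pos hd ht fun u hu ↦ ?_
  rw [mul_comm]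
  exact re_mul_sinh_div_pos hc ht fun s hs ↦ hcosh s hs u hu

lemma re_cosh_sub_cosh_div_pos {a b : ℂ} (hab : a ^ 2 ≠ b ^ 2) {t : ℝ} (ht : t ≠ 0)
    (h : max |a.im| |b.im| * |t| ≤ π / 2) :
    0 < ((Complex.cosh (a * t) - Complex.cosh (b * t)) / (a ^ 2 - b ^ 2)).re := by
  wlog hpos : 0 < t generalizing t
  · simpa using this (neg_ne_zero.2 ht) (by rwa [abs_neg])
      (neg_pos.2 ((not_lt.1 hpos).lt_of_ne ht))
  obtain ⟨c, d, rfl, rfl⟩ : ∃ c d, a = c + d ∧ b = c - d :=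
    ⟨(a + b) / 2, (a - b) / 2, by ring, by ring⟩
  obtain ⟨hc, hd⟩ : c ≠ 0 ∧ d ≠ 0 :=
    mul_ne_zero_iff.1 fun h0 ↦ hab (by linear_combination 4 * h0)
  rw [Complex.add_im, Complex.sub_im, max_abs_add_abs_sub, abs_of_pos hpos] at h
  have hquot : (Complex.cosh ((c + d) * t) - Complex.cosh ((c - d) * t)) /
        ((c + d) ^ 2 - (c - d) ^ 2) =
      ((1 / 2 : ℝ) : ℂ) * (Complex.sinh (c * t) / c * (Complex.sinh (d * t) / d)) := by
    rw [add_mul, sub_mul, Complex.cosh_add, Complex.cosh_sub,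
      show (c + d) ^ 2 - (c - d) ^ 2 = 4 * (c * d) by ring]
    push_cast
    field_simp
    ring
  rw [hquot, Complex.re_ofReal_mul]
  exact mul_pos one_half_pos (re_sinh_div_mul_sinh_div_pos hc hd hpos h)

/-! ### Normalized radial eigenfunctions -/

/-- A normalized radial eigenfunction `φ` with eigenvalue `l` of the Laplacian of a rotationally
symmetric space in which the sphere of radius `r` has mean curvature `q r`. The normalization at the
origin is encoded as a limit, so the value `φ 0` is irrelevant. -/
structure IsNormalizedRadialEigenfunction (q : ℝ → ℝ) (l : ℂ) (φ : ℝ → ℂ) : Prop where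
  tendsto_one : Tendsto φ (𝓝[>] 0) (𝓝 1)
  differentiableAt : ∀ r, 0 < r → DifferentiableAt ℝ φ r
  hasDerivAt_deriv : ∀ r, 0 < r → HasDerivAt (deriv φ) (-q r * deriv φ r - l * φ r) r

lemma IsNormalizedRadialEigenfunction.of_continuousOn {q : ℝ → ℝ} {l : ℂ} {φ : ℝ → ℂ}
    (hcont : ContinuousOn φ (Ici 0)) (hzero : φ 0 = 1)
    (hdiff : ∀ r, 0 < r → DifferentiableAt ℝ φ r ∧ DifferentiableAt ℝ (deriv φ) r)
    (heq : ∀ r, 0 < r → deriv (deriv φ) r + q r * deriv φ r + l * φ r = 0) :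
    IsNormalizedRadialEigenfunction q l φ where
  tendsto_one := hzero ▸ (hcont 0 self_mem_Ici).mono_left (nhdsWithin_mono 0 Ioi_subset_Ici_self)
  differentiableAt r hr := (hdiff r hr).1
  hasDerivAt_deriv r hr := (hdiff r hr).2.hasDerivAt.congr_deriv (by linear_combination heq r hr)

lemma IsNormalizedRadialEigenfunction.comp_mul_left {q : ℝ → ℝ} {l : ℂ} {φ : ℝ → ℂ}
    (hφ : IsNormalizedRadialEigenfunction q l φ) {c : ℝ} (hc : 0 < c) :
    IsNormalizedRadialEigenfunction (fun r ↦ c * q (c * r)) (c ^ 2 * l) (fun r ↦ φ (c * r)) := by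
  have hderiv : deriv (fun r ↦ φ (c * r)) = fun r ↦ c • deriv φ (c * r) :=
    funext (deriv_comp_mul_left c φ)
  have hscale (r : ℝ) : HasDerivAt (fun r ↦ c * r) c r := by
    simpa using (hasDerivAt_id r).const_mul c
  have htendsto : Tendsto (fun r ↦ c * r) (𝓝[>] 0) (𝓝[>] 0) := by
    refine tendsto_nhdsWithin_iff.2 ⟨?_, ?_⟩
    · simpa using (hscale 0).continuousAt.tendsto.mono_left nhdsWithin_le_nhds
    · filter_upwards [self_mem_nhdsWithin] with r hr using mul_pos hc hr
  refine ⟨hφ.tendsto_one.comp htendsto, fun r hr ↦ ?_, fun r hr ↦ ?_⟩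
  · exact (hφ.differentiableAt _ (mul_pos hc hr)).comp r (hscale r).differentiableAt
  · rw [hderiv]
    refine (((hφ.hasDerivAt_deriv _ (mul_pos hc hr)).scomp r
      (hscale r)).const_smul c).congr_deriv ?_
    simp only [Complex.real_smul, Complex.ofReal_mul]
    ring

namespace IsNormalizedRadialEigenfunction

variable {q w : ℝ → ℝ} {l : ℂ} {f g : ℝ → ℂ}

lemma exists_mul_wronskian_eq (hw : ∀ r, 0 < r → HasDerivAt w (q r * w r) r)
    (hf : IsNormalizedRadialEigenfunction q l f) (hg : IsNormalizedRadialEigenfunction q l g) :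
    ∃ C : ℂ, ∀ r ∈ Ioi (0 : ℝ), w r * (deriv f r * g r - f r * deriv g r) = C := by
  have hderiv (r : ℝ) (hr : 0 < r) :
      HasDerivAt (fun r ↦ (w r : ℂ) * (deriv f r * g r - f r * deriv g r)) 0 r := by
    refine ((hw r hr).ofReal_comp.mul
      (((hf.hasDerivAt_deriv r hr).mul (hg.differentiableAt r hr).hasDerivAt).sub
        ((hf.differentiableAt r hr).hasDerivAt.mul (hg.hasDerivAt_deriv r hr)))).congr_deriv ?_
    simp only [Pi.mul_apply, Pi.sub_apply, Complex.ofReal_mul]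
    ring
  exact isOpen_Ioi.exists_is_const_of_deriv_eq_zero isPreconnected_Ioi
    (fun r hr ↦ (hderiv r hr).differentiableAt.differentiableWithinAt)
    (fun r hr ↦ (hderiv r hr).deriv)

lemma eventually_ne_zero (hg : IsNormalizedRadialEigenfunction q l g) : ∀ᶠ r in 𝓝[>] 0, g r ≠ 0 :=
  hg.tendsto_one.eventually_ne one_ne_zero

lemma tendsto_div (hf : IsNormalizedRadialEigenfunction q l f)
    (hg : IsNormalizedRadialEigenfunction q l g) :
    Tendsto (fun r ↦ f r / g r) (𝓝[>] 0) (𝓝 1) := by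
  simpa only [div_one, Pi.div_def] using hf.tendsto_one.div hg.tendsto_one one_ne_zero

lemma hasDerivAt_div (hf : IsNormalizedRadialEigenfunction q l f)
    (hg : IsNormalizedRadialEigenfunction q l g) {r : ℝ} (hr : 0 < r) (hgr : g r ≠ 0) :
    HasDerivAt (fun r ↦ f r / g r) ((deriv f r * g r - f r * deriv g r) / g r ^ 2) r :=
  (hf.differentiableAt r hr).hasDerivAt.div (hg.differentiableAt r hr).hasDerivAt hgr

lemma wronskian_eq_zero (hw : ∀ r, 0 < r → HasDerivAt w (q r * w r) r) (hw0 : ∀ r, 0 < r → 0 < w r)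
    (hwO : w =O[𝓝[>] 0] id)
    (hf : IsNormalizedRadialEigenfunction q l f) (hg : IsNormalizedRadialEigenfunction q l g)
    {r : ℝ} (hr : 0 < r) : deriv f r * g r - f r * deriv g r = 0 := by
  -- If the Wronskian were `C / w` with `C ≠ 0`, then `Re (f / (C g))` would have a derivative of
  -- size at least `const / r`, so that `f / g` could not converge at the origin.
  obtain ⟨C, hC⟩ := exists_mul_wronskian_eq hw hf hg
  suffices C = 0 by
    have hwr : (w r : ℂ) ≠ 0 := mod_cast (hw0 r hr).ne'
    simpa [this, hwr] using hC r hr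
  by_contra hC0
  obtain ⟨M, hM, hwM⟩ := hwO.exists_pos
  have hderiv : ∀ᶠ r in 𝓝[>] 0,
      HasDerivAt (fun r ↦ (f r / g r / C).re) ((w r)⁻¹ * ((g r ^ 2)⁻¹).re) r := by
    filter_upwards [hg.eventually_ne_zero, self_mem_nhdsWithin] with r hgr hr
    have hwr : (w r : ℂ) ≠ 0 := mod_cast (hw0 r hr).ne'
    have hW : deriv f r * g r - f r * deriv g r = C / w r :=
      eq_div_of_mul_eq hwr ((mul_comm _ _).trans (hC r hr))
    refine (Complex.reCLM.hasFDerivAt.comp_hasDerivAt r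
      ((hasDerivAt_div hf hg hr hgr).div_const C)).congr_deriv ?_
    rw [← Complex.re_ofReal_mul, Complex.reCLM_apply, hW]
    congr 1
    push_cast
    field_simp
  have hre : ∀ᶠ r in 𝓝[>] 0, 1 / 2 < ((g r ^ 2)⁻¹).re := by
    have hinv : Tendsto (fun r ↦ (g r ^ 2)⁻¹) (𝓝[>] 0) (𝓝 1) := by
      simpa only [one_pow, inv_one] using (hg.tendsto_one.pow 2).inv₀ (by simp)
    exact ((Complex.continuous_re.tendsto 1).comp hinv).eventually_const_lt one_half_lt_one
  have hlower : ∀ᶠ r in 𝓝[>] 0, 1 / (2 * M) / r ≤ (w r)⁻¹ * ((g r ^ 2)⁻¹).re := by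
    filter_upwards [hre, hwM.bound, self_mem_nhdsWithin] with r hre hwr (hr : 0 < r)
    have hw0r := hw0 r hr
    rw [id, norm_of_nonneg hw0r.le, norm_of_nonneg hr.le] at hwr
    calc 1 / (2 * M) / r = (M * r)⁻¹ * (1 / 2) := by field_simp
      _ ≤ (w r)⁻¹ * ((g r ^ 2)⁻¹).re := by gcongr
  exact not_tendsto_nhdsGT_zero_of_div_le_deriv (by positivity) hderiv hlower _
    ((Complex.continuous_re.tendsto _).comp ((hf.tendsto_div hg).div_const C))

lemma exists_eqOn_Ioo (hw : ∀ r, 0 < r → HasDerivAt w (q r * w r) r) (hw0 : ∀ r, 0 < r → 0 < w r)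
    (hwO : w =O[𝓝[>] 0] id)
    (hf : IsNormalizedRadialEigenfunction q l f) (hg : IsNormalizedRadialEigenfunction q l g) :
    ∃ d > 0, EqOn f g (Ioo 0 d) := by
  obtain ⟨d, hd, hgne⟩ := mem_nhdsGT_iff_exists_Ioo_subset.1 hg.eventually_ne_zero
  have hderiv (r) (hr : r ∈ Ioo 0 d) : HasDerivAt (fun r ↦ f r / g r) 0 r :=
    (hasDerivAt_div hf hg hr.1 (hgne hr)).congr_deriv (by
      rw [wronskian_eq_zero hw hw0 hwO hf hg hr.1, zero_div])
  obtain ⟨a, ha⟩ := isOpen_Ioo.exists_is_const_of_deriv_eq_zero isPreconnected_Ioo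
    (fun r hr ↦ (hderiv r hr).differentiableAt.differentiableWithinAt)
    (fun r hr ↦ (hderiv r hr).deriv)
  have ha1 : a = 1 := tendsto_nhds_unique_of_eventuallyEq tendsto_const_nhds (hf.tendsto_div hg)
    (eventually_of_mem (Ioo_mem_nhdsGT hd) fun r hr ↦ (ha r hr).symm)
  exact ⟨d, hd, fun r hr ↦ (div_eq_one_iff_eq (hgne hr)).1 ((ha r hr).trans ha1)⟩

theorem eqOn_Ioi (hq : ContinuousOn q (Ioi 0)) (hw : ∀ r, 0 < r → HasDerivAt w (q r * w r) r)
    (hw0 : ∀ r, 0 < r → 0 < w r) (hwO : w =O[𝓝[>] 0] id)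
    (hf : IsNormalizedRadialEigenfunction q l f) (hg : IsNormalizedRadialEigenfunction q l g) :
    EqOn f g (Ioi 0) := by
  intro R (hR : 0 < R)
  obtain ⟨d, hd, heq⟩ := exists_eqOn_Ioo hw hw0 hwO hf hg
  obtain ⟨δ, hδ0, hδ⟩ := exists_between (lt_min hd hR)
  have hδd : δ ∈ Ioo 0 d := ⟨hδ0, hδ.trans_le (min_le_left d R)⟩
  have hqC : ContinuousOn (fun r ↦ -(q r : ℂ)) (Icc δ R) :=
    (Complex.continuous_ofReal.comp_continuousOn
      (hq.mono fun r hr ↦ hδ0.trans_le hr.1)).neg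
  have hzero := eqOn_zero_of_linear_second_order (u := fun r ↦ f r - g r)
    (v := fun r ↦ deriv f r - deriv g r) (q := fun _ ↦ -l) hqC continuousOn_const
    (fun r hr ↦ (hf.differentiableAt r (hδ0.trans_le hr.1)).hasDerivAt.sub
      (hg.differentiableAt r (hδ0.trans_le hr.1)).hasDerivAt)
    (fun r hr ↦ ((hf.hasDerivAt_deriv r (hδ0.trans_le hr.1)).sub
      (hg.hasDerivAt_deriv r (hδ0.trans_le hr.1))).congr_deriv (by
        simp only [smul_eq_mul]; ring))
    (sub_eq_zero.2 (heq hδd))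
    (sub_eq_zero.2 (heq.eventuallyEq_of_mem (isOpen_Ioo.mem_nhds hδd)).deriv_eq)
  exact sub_eq_zero.1 (hzero ⟨(hδ.trans_le (min_le_right d R)).le, le_rfl⟩)

end IsNormalizedRadialEigenfunction

/-! ### Busemann functions -/

/-- The Busemann function of hyperbolic space of curvature `-1`, at the point with polar radius `r`
whose direction makes the angle `π - θ` with the ideal point. -/
noncomputable def busemann (r θ : ℝ) : ℝ := log (cosh r + sinh r * cos θ)

/-- The derivative `(sinh r + cosh r cos θ) / (cosh r + sinh r cos θ)` of `busemann r θ` in `r`. -/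
noncomputable def busemannSlope (r θ : ℝ) : ℝ :=
  (sinh r + cosh r * cos θ) / (cosh r + sinh r * cos θ)

lemma cosh_add_sinh_mul_cos_mem_Icc (r θ : ℝ) :
    cosh r + sinh r * cos θ ∈ Icc (exp (-|r|)) (exp |r|) := by
  have h : |sinh r * cos θ| ≤ sinh |r| := by
    rw [abs_mul, abs_sinh]
    exact mul_le_of_le_one_right (sinh_nonneg_iff.2 (abs_nonneg r)) (abs_cos_le_one θ)
  rw [← cosh_abs r, ← cosh_sub_sinh, ← cosh_add_sinh]
  obtain ⟨hlower, hupper⟩ := abs_le.1 h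
  constructor <;> linarith

lemma cosh_add_sinh_mul_cos_pos (r θ : ℝ) : 0 < cosh r + sinh r * cos θ :=
  (exp_pos _).trans_le (cosh_add_sinh_mul_cos_mem_Icc r θ).1

lemma abs_busemann_le (r θ : ℝ) : |busemann r θ| ≤ |r| := by
  obtain ⟨hlower, hupper⟩ := cosh_add_sinh_mul_cos_mem_Icc r θ
  have hpos := cosh_add_sinh_mul_cos_pos r θ
  exact abs_le.2 ⟨(le_log_iff_exp_le hpos).2 hlower, (log_le_iff_le_exp hpos).2 hupper⟩

@[simp]
lemma busemann_zero_left (θ : ℝ) : busemann 0 θ = 0 := by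
  simp [busemann]

lemma busemann_pi_div_two_ne_zero {r : ℝ} (hr : r ≠ 0) : busemann r (π / 2) ≠ 0 := by
  simpa [busemann] using (log_pos (one_lt_cosh.2 hr)).ne'

@[fun_prop]
lemma continuous_busemann : Continuous fun x : ℝ × ℝ ↦ busemann x.1 x.2 :=
  Continuous.log (by fun_prop) fun x ↦ (cosh_add_sinh_mul_cos_pos x.1 x.2).ne'

@[fun_prop]
lemma continuous_busemannSlope : Continuous fun x : ℝ × ℝ ↦ busemannSlope x.1 x.2 :=
  Continuous.div₀ (by fun_prop) (by fun_prop) fun x ↦ (cosh_add_sinh_mul_cos_pos x.1 x.2).ne'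

lemma hasDerivAt_busemann (r θ : ℝ) : HasDerivAt (busemann · θ) (busemannSlope r θ) r :=
  ((hasDerivAt_cosh r).add ((hasDerivAt_sinh r).mul_const (cos θ))).log
    (cosh_add_sinh_mul_cos_pos r θ).ne'

lemma hasDerivAt_busemannSlope (r θ : ℝ) :
    HasDerivAt (busemannSlope · θ) (1 - busemannSlope r θ ^ 2) r := by
  have hne := (cosh_add_sinh_mul_cos_pos r θ).ne'
  refine (((hasDerivAt_sinh r).add ((hasDerivAt_cosh r).mul_const (cos θ))).div
    ((hasDerivAt_cosh r).add ((hasDerivAt_sinh r).mul_const (cos θ))) hne).congr_deriv ?_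
  simp only [busemannSlope, Pi.add_apply]
  field_simp

lemma hasDerivAt_cosh_add_sinh_mul_cos (r θ : ℝ) :
    HasDerivAt (fun θ ↦ cosh r + sinh r * cos θ) (-(sinh r * sin θ)) θ :=
  (((hasDerivAt_cos θ).const_mul (sinh r)).const_add (cosh r)).congr_deriv (mul_neg _ _)

lemma hasDerivAt_busemann_right (r θ : ℝ) :
    HasDerivAt (busemann r) (-(sinh r * sin θ) / (cosh r + sinh r * cos θ)) θ :=
  (hasDerivAt_cosh_add_sinh_mul_cos r θ).log (cosh_add_sinh_mul_cos_pos r θ).ne'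

lemma one_sub_busemannSlope_sq (r θ : ℝ) :
    1 - busemannSlope r θ ^ 2 = (sin θ / (cosh r + sinh r * cos θ)) ^ 2 := by
  have hne := (cosh_add_sinh_mul_cos_pos r θ).ne'
  rw [busemannSlope]
  field_simp
  linear_combination (1 - cos θ ^ 2) * cosh_sq r - sin_sq_add_cos_sq θ

lemma one_sub_coth_mul_busemannSlope {r : ℝ} (hr : r ≠ 0) (θ : ℝ) :
    1 - cosh r / sinh r * busemannSlope r θ =
      -(cos θ / (sinh r * (cosh r + sinh r * cos θ))) := by
  have hne := (cosh_add_sinh_mul_cos_pos r θ).ne'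
  have hsinh : sinh r ≠ 0 := sinh_ne_zero.2 hr
  rw [busemannSlope]
  field_simp
  linear_combination -cos θ * cosh_sq r

/-! ### Spherical functions -/

section SphericalFunction

variable {k : ℝ}

/-- The weight `sin θ ^ (k - 1)` times the horocyclic wave `exp (-α * busemann r θ)` times the
`n`-th power of `busemannSlope r θ`. -/
noncomputable def horocyclicDensity (k : ℝ) (α : ℂ) (n : ℕ) (r θ : ℝ) : ℂ :=
  ((sin θ ^ (k - 1) : ℝ) : ℂ) * Complex.exp (-α * busemann r θ) * busemannSlope r θ ^ n

/-- The integral of `horocyclicDensity k α n r` over `[0, π]`. The case `n = 0` is, up to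
normalization, the average of a horocyclic wave over the sphere of radius `r` in dimension `k + 1`;
its radial derivatives are combinations of the cases `n = 1, 2`. -/
noncomputable def horocyclicMoment (k : ℝ) (α : ℂ) (n : ℕ) (r : ℝ) : ℂ :=
  ∫ θ in 0..π, horocyclicDensity k α n r θ

lemma continuous_sin_rpow (hk : 1 ≤ k) : Continuous fun θ ↦ sin θ ^ (k - 1) :=
  continuous_sin.rpow_const fun _ ↦ .inr (sub_nonneg.2 hk)

lemma continuous_horocyclicDensity (hk : 1 ≤ k) (α : ℂ) (n : ℕ) :
    Continuous fun x : ℝ × ℝ ↦ horocyclicDensity k α n x.1 x.2 := by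
  have hsin : Continuous fun x : ℝ × ℝ ↦ sin x.2 ^ (k - 1) :=
    (continuous_sin_rpow hk).comp continuous_snd
  exact ((Complex.continuous_ofReal.comp hsin).mul (by fun_prop)).mul (by fun_prop)

lemma intervalIntegrable_horocyclicDensity (hk : 1 ≤ k) (α : ℂ) (n : ℕ) (r : ℝ) :
    IntervalIntegrable (horocyclicDensity k α n r) volume 0 π :=
  (continuous_horocyclicDensity hk α n).comp (.prodMk_right r) |>.intervalIntegrable _ _

lemma hasDerivAt_horocyclicDensity (k : ℝ) (α : ℂ) (n : ℕ) (r θ : ℝ) :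
    HasDerivAt (horocyclicDensity k α n · θ)
      (n * horocyclicDensity k α (n - 1) r θ - (n + α) * horocyclicDensity k α (n + 1) r θ) r := by
  refine ((((hasDerivAt_busemann r θ).ofReal_comp.const_mul (-α)).cexp.const_mul _).mul
    ((hasDerivAt_busemannSlope r θ).ofReal_comp.pow n)).congr_deriv ?_
  unfold horocyclicDensity
  cases n with
  | zero => simp; ring
  | succ n => push_cast; simp only [Pi.pow_apply]; ring

lemma hasDerivAt_horocyclicMoment (hk : 1 ≤ k) (α : ℂ) (n : ℕ) (r : ℝ) :
    HasDerivAt (horocyclicMoment k α n)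
      (n * horocyclicMoment k α (n - 1) r - (n + α) * horocyclicMoment k α (n + 1) r) r := by
  have hcont := continuous_horocyclicDensity hk α
  have hint (n : ℕ) := intervalIntegrable_horocyclicDensity hk α n r
  refine (hasDerivAt_intervalIntegral_of_continuous
    (F' := fun r θ ↦ n * horocyclicDensity k α (n - 1) r θ -
      (n + α) * horocyclicDensity k α (n + 1) r θ) (fun r ↦ (hcont n).comp (.prodMk_right r))
    (((hcont (n - 1)).const_mul (n : ℂ)).sub ((hcont (n + 1)).const_mul (n + α : ℂ)))
    (fun r θ ↦ hasDerivAt_horocyclicDensity k α n r θ) r).congr_deriv ?_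
  rw [intervalIntegral.integral_sub ((hint _).const_mul _) ((hint _).const_mul _),
    intervalIntegral.integral_const_mul, intervalIntegral.integral_const_mul]
  rfl

lemma horocyclicDensity_zero_sub_two (k : ℝ) (α : ℂ) (r θ : ℝ) :
    horocyclicDensity k α 0 r θ - horocyclicDensity k α 2 r θ =
      horocyclicDensity k α 0 r θ * ((sin θ / (cosh r + sinh r * cos θ)) ^ 2 : ℝ) := by
  rw [← one_sub_busemannSlope_sq]
  simp only [horocyclicDensity]
  push_cast
  ring

lemma horocyclicDensity_zero_sub_coth_mul_one (k : ℝ) (α : ℂ) {r : ℝ} (hr : r ≠ 0) (θ : ℝ) :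
    horocyclicDensity k α 0 r θ - (cosh r / sinh r : ℝ) * horocyclicDensity k α 1 r θ =
      horocyclicDensity k α 0 r θ * (-(cos θ / (sinh r * (cosh r + sinh r * cos θ))) : ℝ) := by
  rw [← one_sub_coth_mul_busemannSlope hr]
  simp only [horocyclicDensity]
  push_cast
  ring

lemma hasDerivAt_exp_mul_busemann_mul_sin_rpow_div (k : ℝ) (α : ℂ) {r θ : ℝ} (hr : r ≠ 0)
    (hθ : 0 < sin θ) :
    HasDerivAt (fun θ ↦ Complex.exp (-α * busemann r θ) *
        ((sin θ ^ k / (cosh r + sinh r * cos θ) : ℝ) : ℂ))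
      (sinh r * ((α + 1) * (horocyclicDensity k α 0 r θ - horocyclicDensity k α 2 r θ) -
        k * (horocyclicDensity k α 0 r θ -
          (cosh r / sinh r : ℝ) * horocyclicDensity k α 1 r θ))) θ := by
  have hU := (cosh_add_sinh_mul_cos_pos r θ).ne'
  have hpow : sin θ ^ k = sin θ ^ (k - 1) * sin θ := by
    rw [← rpow_add_one hθ.ne', sub_add_cancel]
  refine ((hasDerivAt_busemann_right r θ).ofReal_comp.const_mul (-α)).cexp.mul
    (((hasDerivAt_sin θ).rpow_const (.inl hθ.ne')).div
      (hasDerivAt_cosh_add_sinh_mul_cos r θ) hU).ofReal_comp |>.congr_deriv ?_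
  have hUC : ((cosh r + sinh r * cos θ : ℝ) : ℂ) ≠ 0 := mod_cast hU
  have hsinhC : ((sinh r : ℝ) : ℂ) ≠ 0 := mod_cast sinh_ne_zero.2 hr
  simp only [Pi.div_apply]
  rw [horocyclicDensity_zero_sub_two, horocyclicDensity_zero_sub_coth_mul_one k α hr, hpow,
    horocyclicDensity]
  generalize cosh r + sinh r * cos θ = U at hUC ⊢
  generalize sinh r = S at hsinhC ⊢
  generalize sin θ ^ (k - 1) = P
  push_cast
  field_simp
  ring

lemma horocyclicMoment_recurrence (hk : 1 ≤ k) (α : ℂ) {r : ℝ} (hr : r ≠ 0) :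
    (α + 1) * (horocyclicMoment k α 0 r - horocyclicMoment k α 2 r) =
      k * (horocyclicMoment k α 0 r - (cosh r / sinh r : ℝ) * horocyclicMoment k α 1 r) := by
  have hint (n : ℕ) := intervalIntegrable_horocyclicDensity hk α n r
  have hcont : Continuous fun θ ↦ Complex.exp (-α * busemann r θ) *
      ((sin θ ^ k / (cosh r + sinh r * cos θ) : ℝ) : ℂ) := by
    refine .mul (by fun_prop) (Complex.continuous_ofReal.comp (.div₀ ?_ (by fun_prop) ?_))
    · exact continuous_sin.rpow_const fun _ ↦ .inr (by linarith)
    · exact fun θ ↦ (cosh_add_sinh_mul_cos_pos r θ).ne'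
  have hft := intervalIntegral.integral_eq_sub_of_hasDerivAt_of_le pi_pos.le hcont.continuousOn
    (fun θ hθ ↦ hasDerivAt_exp_mul_busemann_mul_sin_rpow_div k α hr (sin_pos_of_mem_Ioo hθ))
    (((((hint 0).sub (hint 2)).const_mul _).sub
      (((hint 0).sub ((hint 1).const_mul _)).const_mul _)).const_mul _)
  rw [intervalIntegral.integral_const_mul, intervalIntegral.integral_sub
      (((hint 0).sub (hint 2)).const_mul _) (((hint 0).sub ((hint 1).const_mul _)).const_mul _),
    intervalIntegral.integral_const_mul, intervalIntegral.integral_const_mul,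
    intervalIntegral.integral_sub (hint 0) (hint 2),
    intervalIntegral.integral_sub (hint 0) ((hint 1).const_mul _),
    intervalIntegral.integral_const_mul] at hft
  have hk0 : k ≠ 0 := by linarith
  simp only [sin_zero, sin_pi, zero_rpow hk0, zero_div, Complex.ofReal_zero, mul_zero, sub_zero,
    mul_eq_zero, Complex.ofReal_eq_zero, sinh_ne_zero.2 hr, false_or] at hft
  exact sub_eq_zero.1 hft

lemma integral_sin_rpow_pos (hk : 1 ≤ k) : 0 < ∫ θ in 0..π, sin θ ^ (k - 1) :=
  intervalIntegral.intervalIntegral_pos_of_pos_on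
    ((continuous_sin_rpow hk).intervalIntegrable _ _)
    (fun _ hθ ↦ rpow_pos_of_pos (sin_pos_of_mem_Ioo hθ) _) pi_pos

/-- The spherical function of hyperbolic space of curvature `-1` and dimension `k + 1`, as the
average of a horocyclic wave over the sphere of radius `r`; `k` may be any real number `≥ 1`. -/
noncomputable def sphericalFunction (k : ℝ) (α : ℂ) (r : ℝ) : ℂ :=
  horocyclicMoment k α 0 r / (∫ θ in 0..π, sin θ ^ (k - 1) : ℝ)

lemma sphericalFunction_zero (hk : 1 ≤ k) (α : ℂ) : sphericalFunction k α 0 = 1 := by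
  have hne : ((∫ θ in 0..π, sin θ ^ (k - 1) : ℝ) : ℂ) ≠ 0 := mod_cast (integral_sin_rpow_pos hk).ne'
  rw [sphericalFunction, div_eq_one_iff_eq hne, horocyclicMoment,
    ← intervalIntegral.integral_ofReal]
  simp [horocyclicDensity]

lemma hasDerivAt_sphericalFunction (hk : 1 ≤ k) (α : ℂ) (r : ℝ) :
    HasDerivAt (sphericalFunction k α)
      (-α * horocyclicMoment k α 1 r / (∫ θ in 0..π, sin θ ^ (k - 1) : ℝ)) r :=
  ((hasDerivAt_horocyclicMoment hk α 0 r).div_const _).congr_deriv (by simp)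

lemma isNormalizedRadialEigenfunction_sphericalFunction (hk : 1 ≤ k) (α : ℂ) :
    IsNormalizedRadialEigenfunction (fun r ↦ k * (cosh r / sinh r)) (α * k - α ^ 2)
      (sphericalFunction k α) where
  tendsto_one := sphericalFunction_zero hk α ▸
    (hasDerivAt_sphericalFunction hk α 0).continuousAt.tendsto.mono_left nhdsWithin_le_nhds
  differentiableAt r _ := (hasDerivAt_sphericalFunction hk α r).differentiableAt
  hasDerivAt_deriv r hr := by
    rw [funext fun r ↦ (hasDerivAt_sphericalFunction hk α r).deriv, sphericalFunction]
    refine (((hasDerivAt_horocyclicMoment hk α 1 r).const_mul (-α)).div_const _).congr_deriv ?_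
    have hrec := horocyclicMoment_recurrence hk α hr.ne'
    push_cast [tsub_self, one_add_one_eq_two] at hrec ⊢
    linear_combination (-α / (∫ θ in 0..π, sin θ ^ (k - 1) : ℝ)) * hrec

lemma IsNormalizedRadialEigenfunction.eqOn_sphericalFunction (hk : 1 ≤ k) {α : ℂ} {φ : ℝ → ℂ}
    (hφ : IsNormalizedRadialEigenfunction (fun r ↦ k * (cosh r / sinh r)) (α * k - α ^ 2) φ) :
    EqOn φ (sphericalFunction k α) (Ioi 0) := by
  have hsinh (r : ℝ) (hr : 0 < r) : 0 < sinh r := sinh_pos_iff.2 hr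
  refine hφ.eqOn_Ioi (w := fun r ↦ sinh r ^ k) ?_ (fun r hr ↦ ?_)
    (fun r hr ↦ rpow_pos_of_pos (hsinh r hr) k) ?_
    (isNormalizedRadialEigenfunction_sphericalFunction hk α)
  · exact continuousOn_const.mul
      (continuous_cosh.continuousOn.div continuous_sinh.continuousOn fun r hr ↦ (hsinh r hr).ne')
  · refine ((hasDerivAt_sinh r).rpow_const (.inl (hsinh r hr).ne')).congr_deriv ?_
    rw [rpow_sub_one (hsinh r hr).ne']
    ring
  · have hle : ∀ᶠ r in 𝓝[>] (0 : ℝ), ‖sinh r ^ k‖ ≤ ‖sinh r‖ := by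
      have hlt : ∀ᶠ r in 𝓝[>] (0 : ℝ), sinh r < 1 :=
        (continuous_sinh.tendsto' 0 0 sinh_zero).eventually_lt_const one_pos |>.filter_mono
          nhdsWithin_le_nhds
      filter_upwards [self_mem_nhdsWithin, hlt] with r hr hlt
      rw [norm_of_nonneg (rpow_nonneg (hsinh r hr).le k), norm_of_nonneg (hsinh r hr).le]
      simpa using rpow_le_rpow_of_exponent_ge (hsinh r hr) hlt.le hk
    have hO : sinh =O[𝓝[>] 0] id := by
      simpa [Function.id_def] using (hasDerivAt_sinh 0).isBigO_sub.mono nhdsWithin_le_nhds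
    exact (Asymptotics.IsBigO.of_bound' hle).trans hO

lemma IsNormalizedRadialEigenfunction.eq_sphericalFunction_div (hk : 1 ≤ k) {ρ : ℝ} (hρ : 0 < ρ)
    {α : ℂ} {φ : ℝ → ℂ} (hφ : IsNormalizedRadialEigenfunction
      (fun r ↦ k / ρ * (cosh (r / ρ) / sinh (r / ρ))) ((α * k - α ^ 2) / (ρ : ℂ) ^ 2) φ)
    {r : ℝ} (hr : 0 < r) : φ r = sphericalFunction k α (r / ρ) := by
  have hρC : (ρ : ℂ) ≠ 0 := mod_cast hρ.ne'
  have hscaled := hφ.comp_mul_left hρ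
  simp only [mul_div_cancel_left₀ _ hρ.ne', ← mul_assoc, mul_div_cancel₀ _ hρ.ne',
    mul_div_cancel₀ _ (pow_ne_zero 2 hρC)] at hscaled
  simpa [mul_div_cancel₀ _ hρ.ne'] using hscaled.eqOn_sphericalFunction hk (div_pos hr hρ)

lemma eqOn_sphericalFunction_sub (hk : 1 ≤ k) (α : ℂ) :
    EqOn (sphericalFunction k (k - α)) (sphericalFunction k α) (Ioi 0) := by
  refine IsNormalizedRadialEigenfunction.eqOn_sphericalFunction hk ?_
  convert isNormalizedRadialEigenfunction_sphericalFunction hk (k - α) using 1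
  ring

lemma sphericalFunction_eq_integral_cosh (hk : 1 ≤ k) (α : ℂ) {r : ℝ} (hr : 0 < r) :
    sphericalFunction k α r =
      (∫ θ in 0..π, ((sin θ ^ (k - 1) * exp (-(k / 2) * busemann r θ) : ℝ) : ℂ) *
        Complex.cosh ((α - k / 2) * busemann r θ)) / (∫ θ in 0..π, sin θ ^ (k - 1) : ℝ) := by
  have hint (α : ℂ) := intervalIntegrable_horocyclicDensity hk α 0 r
  have haverage : sphericalFunction k α r =
      (sphericalFunction k α r + sphericalFunction k (k - α) r) / 2 := by
    rw [eqOn_sphericalFunction_sub hk α hr, add_self_div_two]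
  have hdensity (θ : ℝ) : horocyclicDensity k α 0 r θ + horocyclicDensity k (k - α) 0 r θ =
      2 * (((sin θ ^ (k - 1) * exp (-(k / 2) * busemann r θ) : ℝ) : ℂ) *
        Complex.cosh ((α - k / 2) * busemann r θ)) := by
    have hα : -α * busemann r θ = -(k / 2) * busemann r θ + -((α - k / 2) * busemann r θ) := by ring
    have hkα : -(k - α) * busemann r θ = -(k / 2) * busemann r θ + (α - k / 2) * busemann r θ := by
      ring
    rw [horocyclicDensity, horocyclicDensity, Complex.cosh, hα, hkα, Complex.exp_add,
      Complex.exp_add]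
    push_cast
    ring
  rw [haverage, sphericalFunction, sphericalFunction, ← add_div, horocyclicMoment,
    horocyclicMoment, ← intervalIntegral.integral_add (hint α) (hint (k - α))]
  simp only [hdensity, intervalIntegral.integral_const_mul]
  ring

lemma re_sphericalFunction_sub_div (hk : 1 ≤ k) (α β : ℂ) {r : ℝ} (hr : 0 < r) (z : ℂ) :
    ((sphericalFunction k α r - sphericalFunction k β r) / z).re =
      (∫ θ in 0..π, sin θ ^ (k - 1) * exp (-(k / 2) * busemann r θ) *
        ((Complex.cosh ((α - k / 2) * busemann r θ) -
          Complex.cosh ((β - k / 2) * busemann r θ)) / z).re) /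
        ∫ θ in 0..π, sin θ ^ (k - 1) := by
  have hint (α : ℂ) : IntervalIntegrable (fun θ ↦
      ((sin θ ^ (k - 1) * exp (-(k / 2) * busemann r θ) : ℝ) : ℂ) *
        Complex.cosh ((α - k / 2) * busemann r θ)) volume 0 π :=
    Continuous.intervalIntegrable (.mul (Complex.continuous_ofReal.comp
      ((continuous_sin_rpow hk).mul (by fun_prop))) (by fun_prop)) _ _
  rw [sphericalFunction_eq_integral_cosh hk α hr, sphericalFunction_eq_integral_cosh hk β hr,
    ← sub_div, ← intervalIntegral.integral_sub (hint α) (hint β), div_right_comm,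
    ← intervalIntegral.integral_div, Complex.div_ofReal_re]
  congr 1
  rw [← Complex.reCLM_apply, ← Complex.reCLM.intervalIntegral_comp_comm
    (((hint α).sub (hint β)).div_const z)]
  refine intervalIntegral.integral_congr fun θ _ ↦ ?_
  rw [← mul_sub, mul_div_assoc, Complex.reCLM_apply, Complex.re_ofReal_mul]

lemma re_sphericalFunction_sub_div_pos (hk : 1 ≤ k) {α β : ℂ}
    (hαβ : α * k - α ^ 2 ≠ β * k - β ^ 2) {r : ℝ} (hr : 0 < r)
    (hrp : max |α.im| |β.im| * r ≤ π / 2) :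
    0 < ((sphericalFunction k α r - sphericalFunction k β r) /
      ((β * k - β ^ 2) - (α * k - α ^ 2))).re := by
  have hdistinct : (α - k / 2) ^ 2 ≠ (β - k / 2) ^ 2 := fun h ↦ hαβ (by linear_combination -h)
  have hdiff : (β * k - β ^ 2) - (α * k - α ^ 2) = (α - k / 2) ^ 2 - (β - k / 2) ^ 2 := by ring
  rw [hdiff, re_sphericalFunction_sub_div hk _ _ hr]
  have hpos (θ : ℝ) (hθ : busemann r θ ≠ 0) :
      0 < ((Complex.cosh ((α - k / 2) * busemann r θ) -
        Complex.cosh ((β - k / 2) * busemann r θ)) / ((α - k / 2) ^ 2 - (β - k / 2) ^ 2)).re := by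
    refine re_cosh_sub_cosh_div_pos hdistinct hθ ?_
    calc max |(α - k / 2).im| |(β - k / 2).im| * |busemann r θ|
        ≤ max |α.im| |β.im| * r := by
          simpa using mul_le_mul_of_nonneg_left
            ((abs_busemann_le r θ).trans_eq (abs_of_pos hr)) (by positivity)
      _ ≤ π / 2 := hrp
  refine div_pos (intervalIntegral.integral_pos pi_pos ?_ (fun θ hθ ↦ ?_)
    ⟨π / 2, ⟨by positivity, half_le_self pi_pos.le⟩, ?_⟩) (integral_sin_rpow_pos hk)
  · exact (((continuous_sin_rpow hk).mul (by fun_prop)).mul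
      (Complex.continuous_re.comp (by fun_prop))).continuousOn
  · have hsin := sin_nonneg_of_mem_Icc (Ioc_subset_Icc_self hθ)
    refine mul_nonneg (by positivity) ?_
    rcases eq_or_ne (busemann r θ) 0 with h | h
    · simp [h]
    · exact (hpos θ h).le
  · refine mul_pos ?_ (hpos _ (busemann_pi_div_two_ne_zero hr.ne'))
    simpa using exp_pos _

end SphericalFunction

end OneRadius

theorem one_radius_theorem_general {ρ k : ℝ} (hρ : 0 < ρ) (hk : 1 ≤ k) {μ ν α β : ℂ}
    (hμν : μ ≠ ν) (hμα : μ = (α * k - α ^ 2) / (ρ : ℂ) ^ 2)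
    (hνβ : ν = (β * k - β ^ 2) / (ρ : ℂ) ^ 2) {φμ φν : ℝ → ℂ}
    (hφμ : OneRadius.IsNormalizedRadialEigenfunction
      (fun r ↦ k / ρ * (cosh (r / ρ) / sinh (r / ρ))) μ φμ)
    (hφν : OneRadius.IsNormalizedRadialEigenfunction
      (fun r ↦ k / ρ * (cosh (r / ρ) / sinh (r / ρ))) ν φν)
    {r : ℝ} (hr : 0 < r) (hrp : max |α.im| |β.im| * r ≤ π * ρ / 2) :
    0 < ((φμ r - φν r) / (ν - μ)).re := by
  subst hμα hνβ
  have hrp' : max |α.im| |β.im| * (r / ρ) ≤ π / 2 := by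
    rw [← mul_div_assoc, div_le_iff₀ hρ]
    linarith
  have hpos := OneRadius.re_sphericalFunction_sub_div_pos hk (fun h ↦ hμν (by rw [h]))
    (div_pos hr hρ) hrp'
  rw [hφμ.eq_sphericalFunction_div hk hρ hr, hφν.eq_sphericalFunction_div hk hρ hr, ← sub_div,
    div_div_eq_mul_div, mul_comm, mul_div_assoc, ← Complex.ofReal_pow, Complex.re_ofReal_mul]
  exact mul_pos (by positivity) hpos

/-- One Radius Theorem: two distinct-eigenvalue normalized radial eigenfunctions of the
hyperbolic Laplacian (value `1` at the origin) cannot agree at any radius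
`r ∈ (0, πρ/(2p)]`, where `p = max (|Im α|, |Im β|) > 0` and `μ = (αk − α²)/ρ²`,
`ν = (βk − β²)/ρ²`. -/
theorem one_radius_theorem
    (ρ : ℝ) (hρ : 0 < ρ) (k : ℕ) (hk : 1 ≤ k)
    (μ ν α β : ℂ) (hμν : μ ≠ ν)
    (hμα : μ = (α * k - α ^ 2) / (ρ : ℂ) ^ 2)
    (hνβ : ν = (β * k - β ^ 2) / (ρ : ℂ) ^ 2)
    (p : ℝ) (hp : p = max |α.im| |β.im|) (hp0 : 0 < p)
    (φμ φν : ℝ → ℂ)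
    (hcμ : ContinuousOn φμ (Set.Ici 0)) (h0μ : φμ 0 = 1)
    (hdμ : ∀ r : ℝ, 0 < r → DifferentiableAt ℝ φμ r ∧ DifferentiableAt ℝ (deriv φμ) r)
    (heqμ : ∀ r : ℝ, 0 < r →
      deriv (deriv φμ) r
        + (((k : ℝ) / ρ) * (Real.cosh (r / ρ) / Real.sinh (r / ρ)) : ℝ) * deriv φμ r
        + μ * φμ r = 0)
    (hcν : ContinuousOn φν (Set.Ici 0)) (h0ν : φν 0 = 1)
    (hdν : ∀ r : ℝ, 0 < r → DifferentiableAt ℝ φν r ∧ DifferentiableAt ℝ (deriv φν) r)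
    (heqν : ∀ r : ℝ, 0 < r →
      deriv (deriv φν) r
        + (((k : ℝ) / ρ) * (Real.cosh (r / ρ) / Real.sinh (r / ρ)) : ℝ) * deriv φν r
        + ν * φν r = 0) :
    ∀ r ∈ Set.Ioc (0 : ℝ) (π * ρ / (2 * p)), φμ r ≠ φν r := by
  intro r hr heq
  have hk' : (1 : ℝ) ≤ k := mod_cast hk
  have hrp : max |α.im| |β.im| * r ≤ π * ρ / 2 := by
    rw [← hp]
    linarith [(le_div_iff₀ (by positivity)).1 hr.2]
  have hpos := one_radius_theorem_general hρ hk' hμν (by simpa using hμα) (by simpa using hνβ)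
    (.of_continuousOn hcμ h0μ hdμ heqμ) (.of_continuousOn hcν h0ν hdν heqν) hr.1 hrp
  simp [heq] at hpos
end

section
/- Fix ρ > 0 and an integer k ≥ 1. Let λ ∈ ℝ and let φ : ℝ → ℝ be a normalized radial eigenfunction on [0, ∞) with eigenvalue λ. Then φ has a zero in (0, ∞) if and only if λ > k²/(4ρ²). Moreover, if λ > k²/(4ρ²), then the set {r ∈ (0,∞) : φ(r) = 0} is infinite. -/
open MeasureTheory Real

open Filter Set Topology

/-!
The bottom of the spectrum enters through two substitutions. For a solution of
`φ'' + p φ' + q φ = 0` without zeros, the Riccati variable `y = φ'/φ + p/2` satisfies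
`y' = -y² - Q` with the Liouville potential `Q = q - p²/4 - p'/2`. In the radial equation `Q` tends
to `λ - k²/(4ρ²)`; if this limit is positive then `arctan (y/d)` decreases at least linearly
for a suitable `d > 0`, which is impossible on a half-line, so zeros occur arbitrarily far out.

If `λ ≤ k²/(4ρ²)`, then `g = φ · exp (k r / (2ρ))` satisfies an equation whose zeroth-order
coefficient is nonpositive, so up to the first zero of `g` the flux `w g'`, with `w' = p w`, is
monotone. Because `w r = O(r)` at the origin, a negative flux would force `g' ≤ -c/r` near `0`,
contradicting the continuity of `g` there. Hence `g` increases from `g 0 = 1` and never vanishes.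
-/

/-- The function `φ`, with derivative `φ'`, solves the linear equation `φ'' + p φ' + q φ = 0` at
every point of `s`. The derivative is a parameter so that substitutions can give it explicitly. -/
structure IsSolutionOn (p q φ φ' : ℝ → ℝ) (s : Set ℝ) : Prop where
  hasDerivAt : ∀ r ∈ s, HasDerivAt φ (φ' r) r
  hasDerivAt_deriv : ∀ r ∈ s, HasDerivAt φ' (-(p r * φ' r + q r * φ r)) r

/-- The potential `Q = q - p²/4 - p'/2` in the Liouville normal form `u'' + Q u = 0` of the equation
`φ'' + p φ' + q φ = 0`, where `u = φ · exp (∫ p / 2)`. -/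
noncomputable def liouvillePotential (p q : ℝ → ℝ) (r : ℝ) : ℝ :=
  q r - p r ^ 2 / 4 - deriv p r / 2

theorem exists_neg_sq_add_sq_lt_deriv {y y' : ℝ → ℝ} {d T : ℝ} (hd : 0 < d)
    (hy : ∀ r ∈ Ioi T, HasDerivAt y (y' r) r) : ∃ r ∈ Ioi T, -(y r ^ 2 + d ^ 2) < y' r := by
  by_contra! hle
  have hderiv (r : ℝ) (hr : r ∈ Ioi T) : HasDerivAt (fun r ↦ arctan (y r / d) + d * r)
      (y' r * d / (d ^ 2 + y r ^ 2) + d) r := by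
    refine (((hy r hr).div_const d).arctan.add ((hasDerivAt_id r).const_mul d)).congr_deriv ?_
    field_simp
  have hanti : AntitoneOn (fun r ↦ arctan (y r / d) + d * r) (Ioi T) := by
    refine antitoneOn_of_hasDerivWithinAt_nonpos (convex_Ioi T)
      (fun r hr ↦ (hderiv r hr).continuousAt.continuousWithinAt)
      (fun r hr ↦ (hderiv r (interior_subset hr)).hasDerivWithinAt) fun r hr ↦ ?_
    suffices y' r * d / (d ^ 2 + y r ^ 2) ≤ -d by linarith
    rw [div_le_iff₀ (by positivity)]
    nlinarith [hle r (interior_subset hr)]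
  have hpi : 0 < π / d := by positivity
  have hdrop := hanti (show T + 1 ∈ Ioi T by simp)
    (show T + 1 + π / d ∈ Ioi T by simp only [mem_Ioi]; linarith) (by linarith)
  have hlength : d * (T + 1 + π / d) = d * (T + 1) + π := by field_simp
  linarith [arctan_lt_pi_div_two (y (T + 1) / d),
    neg_pi_div_two_lt_arctan (y (T + 1 + π / d) / d)]

theorem exists_neg_div_lt_deriv {g g' : ℝ → ℝ} {c R : ℝ} (hc : 0 < c) (hR : 0 < R)
    (hcont : ContinuousWithinAt g (Ioi 0) 0) (hg : ∀ r ∈ Ioo 0 R, HasDerivAt g (g' r) r) :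
    ∃ r ∈ Ioo 0 R, -(c / r) < g' r := by
  by_contra! hle
  have hderiv (r : ℝ) (hr : r ∈ Ioo 0 R) :
      HasDerivAt (fun r ↦ g r + c * log r) (g' r + c * r⁻¹) r :=
    (hg r hr).add ((hasDerivAt_log hr.1.ne').const_mul c)
  have hanti : AntitoneOn (fun r ↦ g r + c * log r) (Ioo 0 R) := by
    refine antitoneOn_of_hasDerivWithinAt_nonpos (convex_Ioo 0 R)
      (fun r hr ↦ (hderiv r hr).continuousAt.continuousWithinAt)
      (fun r hr ↦ (hderiv r (interior_subset hr)).hasDerivWithinAt) fun r hr ↦ ?_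
    linarith [hle r (interior_subset hr), div_eq_mul_inv c r]
  have hbot : Tendsto (fun r ↦ g r + c * log r) (𝓝[>] 0) atBot :=
    hcont.tendsto.add_atBot (tendsto_log_nhdsGT_zero.const_mul_atBot hc)
  have hmid : R / 2 ∈ Ioo 0 R := ⟨half_pos hR, half_lt_self hR⟩
  obtain ⟨r, hlt, hr⟩ := ((hbot.eventually (eventually_lt_atBot (g (R / 2) + c * log (R / 2)))).and
    (Ioo_mem_nhdsGT hmid.1)).exists
  exact (hanti ⟨hr.1, hr.2.trans hmid.2⟩ hmid hr.2.le).not_gt hlt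

theorem deriv_nonneg_of_monotoneOn_mul {w g g' : ℝ → ℝ} {C R : ℝ}
    (hcont : ContinuousWithinAt g (Ioi 0) 0) (hg : ∀ r ∈ Ioo 0 R, HasDerivAt g (g' r) r)
    (hw_pos : ∀ r ∈ Ioo 0 R, 0 < w r) (hw_le : ∀ r ∈ Ioo 0 R, w r ≤ C * r)
    (hmono : MonotoneOn (fun r ↦ w r * g' r) (Ioo 0 R)) : ∀ r ∈ Ioo 0 R, 0 ≤ g' r := by
  intro ξ hξ
  by_contra! hneg
  have hflux : w ξ * g' ξ < 0 := mul_neg_of_pos_of_neg (hw_pos ξ hξ) hneg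
  have hC : 0 < C := pos_of_mul_pos_left ((hw_pos ξ hξ).trans_le (hw_le ξ hξ)) hξ.1.le
  obtain ⟨r, hr, hlt⟩ := exists_neg_div_lt_deriv (div_pos (neg_pos.2 hflux) hC) hξ.1 hcont
    fun r hr ↦ hg r ⟨hr.1, hr.2.trans hξ.2⟩
  have hrR : r ∈ Ioo 0 R := ⟨hr.1, hr.2.trans hξ.2⟩
  have hflux_le : w r * g' r ≤ w ξ * g' ξ := hmono hrR hξ hr.2.le
  have hg'_neg : g' r < 0 := by
    by_contra! hnonneg
    linarith [mul_nonneg (hw_pos r hrR).le hnonneg]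
  refine hlt.not_ge ?_
  rw [div_div, ← neg_div, neg_neg, le_div_iff₀ (mul_pos hC hr.1)]
  calc g' r * (C * r) ≤ g' r * w r := mul_le_mul_of_nonpos_left (hw_le r hrR) hg'_neg.le
    _ = w r * g' r := mul_comm _ _
    _ ≤ w ξ * g' ξ := hflux_le

theorem exists_first_zero {f : ℝ → ℝ} {a b : ℝ} (hab : a ≤ b) (hf : ContinuousOn f (Icc a b))
    (ha : 0 < f a) (hb : f b = 0) : ∃ c ∈ Ioc a b, f c = 0 ∧ ∀ x ∈ Ico a c, 0 < f x := by
  have hcompact : IsCompact (Icc a b ∩ f ⁻¹' {0}) :=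
    isCompact_Icc.of_isClosed_subset
      (hf.preimage_isClosed_of_isClosed isClosed_Icc isClosed_singleton) inter_subset_left
  obtain ⟨c, ⟨hc, hfc : f c = 0⟩, hmin⟩ := hcompact.exists_isLeast ⟨b, right_mem_Icc.2 hab, hb⟩
  have hac : a ≠ c := by
    rintro rfl
    exact ha.ne' hfc
  refine ⟨c, ⟨hc.1.lt_of_ne hac, hc.2⟩, hfc, fun x hx ↦ ?_⟩
  by_contra! hfx
  obtain ⟨z, hz, hfz⟩ := intermediate_value_Icc' hx.1
    (hf.mono (Icc_subset_Icc_right (hx.2.le.trans hc.2))) ⟨hfx, ha.le⟩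
  exact (hmin ⟨⟨hz.1, hz.2.trans (hx.2.le.trans hc.2)⟩, hfz⟩).not_gt (hz.2.trans_lt hx.2)

namespace IsSolutionOn

variable {p q φ φ' : ℝ → ℝ} {s : Set ℝ}

theorem mono {t : Set ℝ} (h : IsSolutionOn p q φ φ' s) (hts : t ⊆ s) : IsSolutionOn p q φ φ' t :=
  ⟨fun r hr ↦ h.hasDerivAt r (hts hr), fun r hr ↦ h.hasDerivAt_deriv r (hts hr)⟩

theorem hasDerivAt_riccati (h : IsSolutionOn p q φ φ' s) {r : ℝ} (hr : r ∈ s)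
    (hp : DifferentiableAt ℝ p r) (hφ : φ r ≠ 0) :
    HasDerivAt (fun r ↦ φ' r / φ r + p r / 2)
      (-((φ' r / φ r + p r / 2) ^ 2 + liouvillePotential p q r)) r := by
  refine (((h.hasDerivAt_deriv r hr).div (h.hasDerivAt r hr) hφ).add
    (hp.hasDerivAt.div_const 2)).congr_deriv ?_
  rw [liouvillePotential]
  field_simp
  ring

theorem exists_zero_of_le_liouvillePotential {c T : ℝ}
    (h : IsSolutionOn p q φ φ' (Ioi T)) (hp : ∀ r ∈ Ioi T, DifferentiableAt ℝ p r) (hc : 0 < c)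
    (hpot : ∀ r ∈ Ioi T, c ≤ liouvillePotential p q r) : ∃ r ∈ Ioi T, φ r = 0 := by
  by_contra! hφ
  obtain ⟨r, hr, hlt⟩ := exists_neg_sq_add_sq_lt_deriv (sqrt_pos.2 hc)
    fun r hr ↦ h.hasDerivAt_riccati hr (hp r hr) (hφ r hr)
  rw [sq_sqrt hc.le] at hlt
  linarith [hpot r hr]

theorem frequently_eq_zero_of_tendsto_liouvillePotential {L T : ℝ}
    (h : IsSolutionOn p q φ φ' (Ioi T)) (hp : ∀ r ∈ Ioi T, DifferentiableAt ℝ p r) (hL : 0 < L)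
    (hpot : Tendsto (liouvillePotential p q) atTop (𝓝 L)) :
    ∃ᶠ r in atTop, φ r = 0 := by
  obtain ⟨S, hS⟩ := eventually_atTop.1 (hpot.eventually (eventually_ge_nhds (half_lt_self hL)))
  refine frequently_atTop.2 fun A ↦ ?_
  set B := max A (max S T)
  have hTB : Ioi B ⊆ Ioi T := Ioi_subset_Ioi ((le_max_right S T).trans (le_max_right A _))
  have hSB : S ≤ B := (le_max_left S T).trans (le_max_right A _)
  obtain ⟨r, hr, hφr⟩ := exists_zero_of_le_liouvillePotential (h.mono hTB)
    (fun r hr ↦ hp r (hTB hr)) (half_pos hL) fun r hr ↦ hS r (hSB.trans hr.le)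
  exact ⟨r, (le_max_left A _).trans hr.le, hφr⟩

theorem mul_exp (h : IsSolutionOn p q φ φ' s) (a : ℝ) :
    IsSolutionOn (fun r ↦ p r - 2 * a) (fun r ↦ q r - a * p r + a ^ 2)
      (fun r ↦ φ r * exp (a * r)) (fun r ↦ (φ' r + a * φ r) * exp (a * r)) s := by
  have hexp (r : ℝ) : HasDerivAt (fun r ↦ exp (a * r)) (exp (a * r) * (a * 1)) r :=
    ((hasDerivAt_id r).const_mul a).exp
  refine ⟨fun r hr ↦ ((h.hasDerivAt r hr).mul (hexp r)).congr_deriv ?_, fun r hr ↦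
    (((h.hasDerivAt_deriv r hr).add ((h.hasDerivAt r hr).const_mul a)).mul
      (hexp r)).congr_deriv ?_⟩
  · ring
  · simp only [Pi.add_apply]
    ring

theorem monotoneOn_mul_deriv {w : ℝ → ℝ} {R : ℝ} (h : IsSolutionOn p q φ φ' (Ioo 0 R))
    (hw : ∀ r ∈ Ioo 0 R, HasDerivAt w (p r * w r) r) (hw_pos : ∀ r ∈ Ioo 0 R, 0 < w r)
    (hq : ∀ r ∈ Ioo 0 R, q r ≤ 0) (hφ : ∀ r ∈ Ioo 0 R, 0 ≤ φ r) :
    MonotoneOn (fun r ↦ w r * φ' r) (Ioo 0 R) := by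
  have hderiv (r : ℝ) (hr : r ∈ Ioo 0 R) :
      HasDerivAt (fun r ↦ w r * φ' r) (w r * (-q r * φ r)) r :=
    ((hw r hr).mul (h.hasDerivAt_deriv r hr)).congr_deriv (by ring)
  refine monotoneOn_of_hasDerivWithinAt_nonneg (convex_Ioo 0 R)
    (fun r hr ↦ (hderiv r hr).continuousAt.continuousWithinAt)
    (fun r hr ↦ (hderiv r (interior_subset hr)).hasDerivWithinAt) fun r hr ↦ ?_
  rw [interior_Ioo] at hr
  exact mul_nonneg (hw_pos r hr).le (mul_nonneg (neg_nonneg.2 (hq r hr)) (hφ r hr))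

theorem ne_zero_of_nonpos {w : ℝ → ℝ} {C : ℝ} (h : IsSolutionOn p q φ φ' (Ioi 0))
    (hcont : ContinuousOn φ (Ici 0)) (h0 : 0 < φ 0) (hq : ∀ r ∈ Ioi 0, q r ≤ 0)
    (hw : ∀ r ∈ Ioi 0, HasDerivAt w (p r * w r) r) (hw_pos : ∀ r ∈ Ioi 0, 0 < w r)
    (hw_le : ∀ r ∈ Ioi 0, w r ≤ C * r) : ∀ r ∈ Ioi 0, φ r ≠ 0 := by
  intro b hb hφb
  obtain ⟨R, hR, hφR, hpos⟩ :=
    exists_first_zero (le_of_lt hb) (hcont.mono Icc_subset_Ici_self) h0 hφb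
  have hsub : Ioo 0 R ⊆ Ioi 0 := Ioo_subset_Ioi_self
  have hflux : MonotoneOn (fun r ↦ w r * φ' r) (Ioo 0 R) :=
    (h.mono hsub).monotoneOn_mul_deriv (fun r hr ↦ hw r (hsub hr))
      (fun r hr ↦ hw_pos r (hsub hr)) (fun r hr ↦ hq r (hsub hr))
      fun r hr ↦ (hpos r (Ioo_subset_Ico_self hr)).le
  have hφ'_nonneg : ∀ r ∈ Ioo 0 R, 0 ≤ φ' r :=
    deriv_nonneg_of_monotoneOn_mul ((hcont 0 self_mem_Ici).mono Ioi_subset_Ici_self)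
      (h.mono hsub).hasDerivAt (fun r hr ↦ hw_pos r (hsub hr)) (fun r hr ↦ hw_le r (hsub hr)) hflux
  have hmono : MonotoneOn φ (Icc 0 R) := by
    refine monotoneOn_of_hasDerivWithinAt_nonneg (f' := φ') (convex_Icc 0 R)
      (hcont.mono Icc_subset_Ici_self) ?_ ?_ <;> rw [interior_Icc]
    exacts [fun r hr ↦ (h.hasDerivAt r (hsub hr)).hasDerivWithinAt, hφ'_nonneg]
  have hle : φ 0 ≤ φ R := hmono (left_mem_Icc.2 hR.1.le) (right_mem_Icc.2 hR.1.le) hR.1.le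
  exact (h0.trans_le hle).ne' hφR

end IsSolutionOn

/-- The mean curvature of the geodesic sphere of radius `r` in the space of dimension `m + 1` and
constant curvature `-1/ρ²`: the first-order coefficient of the radial Laplacian. For nonintegral
`m` it is only such a coefficient, as for Jacobi functions. -/
noncomputable def sphereMeanCurvature (m ρ r : ℝ) : ℝ :=
  m / ρ * (cosh (r / ρ) / sinh (r / ρ))

section Hyperbolic

variable {ρ m lam r : ℝ}

theorem hasDerivAt_sphereMeanCurvature (m : ℝ) (hρ : ρ ≠ 0) (hr : r ≠ 0) :
    HasDerivAt (sphereMeanCurvature m ρ) (-(m / ρ ^ 2 / sinh (r / ρ) ^ 2)) r := by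
  have hsinh : sinh (r / ρ) ≠ 0 := sinh_ne_zero.2 (div_ne_zero hr hρ)
  have hdiv : HasDerivAt (fun r ↦ r / ρ) (1 / ρ) r := (hasDerivAt_id r).div_const ρ
  refine ((hdiv.cosh.div hdiv.sinh hsinh).const_mul (m / ρ)).congr_deriv ?_
  field_simp
  linear_combination -m * cosh_sq (r / ρ)

theorem liouvillePotential_sphereMeanCurvature (m lam : ℝ) (hρ : ρ ≠ 0) (hr : r ≠ 0) :
    liouvillePotential (sphereMeanCurvature m ρ) (fun _ ↦ lam) r =
      lam - m ^ 2 / (4 * ρ ^ 2) + m * (2 - m) / (4 * ρ ^ 2) / sinh (r / ρ) ^ 2 := by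
  have hsinh : sinh (r / ρ) ≠ 0 := sinh_ne_zero.2 (div_ne_zero hr hρ)
  rw [liouvillePotential, (hasDerivAt_sphereMeanCurvature m hρ hr).deriv, sphereMeanCurvature,
    mul_pow, div_pow (cosh _), cosh_sq]
  field_simp
  ring

theorem tendsto_sinh_atTop : Tendsto sinh atTop atTop :=
  tendsto_atTop_mono' atTop ((eventually_ge_atTop 0).mono fun _ ↦ self_le_sinh_iff.2) tendsto_id

theorem tendsto_liouvillePotential_sphereMeanCurvature (m lam : ℝ) (hρ : 0 < ρ) :
    Tendsto (liouvillePotential (sphereMeanCurvature m ρ) (fun _ ↦ lam)) atTop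
      (𝓝 (lam - m ^ 2 / (4 * ρ ^ 2))) := by
  have hsinh : Tendsto (fun r ↦ sinh (r / ρ) ^ 2) atTop atTop :=
    (tendsto_pow_atTop two_ne_zero).comp
      (tendsto_sinh_atTop.comp (tendsto_id.atTop_div_const hρ))
  have hlim : Tendsto
      (fun r ↦ lam - m ^ 2 / (4 * ρ ^ 2) + m * (2 - m) / (4 * ρ ^ 2) / sinh (r / ρ) ^ 2)
      atTop (𝓝 (lam - m ^ 2 / (4 * ρ ^ 2))) := by
    simpa only [add_zero] using (hsinh.const_div_atTop _).const_add (lam - m ^ 2 / (4 * ρ ^ 2))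
  refine hlim.congr' ?_
  filter_upwards [eventually_ne_atTop 0] with r hr
  exact (liouvillePotential_sphereMeanCurvature m lam hρ.ne' hr).symm

theorem le_sphereMeanCurvature (hρ : 0 < ρ) (hm : 0 ≤ m) (hr : 0 < r) :
    m / ρ ≤ sphereMeanCurvature m ρ r := by
  have hsinh : 0 < sinh (r / ρ) := sinh_pos_iff.2 (div_pos hr hρ)
  exact le_mul_of_one_le_right (by positivity) ((one_le_div hsinh).2 (sinh_lt_cosh _).le)

/-- A positive solution `w` of `w' = (H - m / ρ) w`, where `H` is the mean curvature of spheres and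
`m / ρ` that of horospheres: the volume density `sinh (r / ρ) ^ m` times
`(2 * exp (-(r / ρ))) ^ m`. -/
noncomputable def horosphericalWeight (m ρ r : ℝ) : ℝ :=
  (1 - exp (-(2 * (r / ρ)))) ^ m

theorem one_sub_exp_neg_two_mul_pos {x : ℝ} (hx : 0 < x) : 0 < 1 - exp (-(2 * x)) :=
  sub_pos.2 (exp_lt_one_iff.2 (by linarith))

theorem horosphericalWeight_pos (m : ℝ) (hρ : 0 < ρ) (hr : 0 < r) :
    0 < horosphericalWeight m ρ r :=
  rpow_pos_of_pos (one_sub_exp_neg_two_mul_pos (div_pos hr hρ)) m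

theorem horosphericalWeight_le (hρ : 0 < ρ) (hm : 1 ≤ m) (hr : 0 < r) :
    horosphericalWeight m ρ r ≤ 2 / ρ * r := by
  have hle_one : 1 - exp (-(2 * (r / ρ))) ≤ 1 := sub_le_self _ (exp_nonneg _)
  calc horosphericalWeight m ρ r ≤ 1 - exp (-(2 * (r / ρ))) :=
        rpow_le_self_of_le_one (one_sub_exp_neg_two_mul_pos (div_pos hr hρ)).le hle_one hm
    _ ≤ 2 * (r / ρ) := by linarith [add_one_le_exp (-(2 * (r / ρ)))]
    _ = 2 / ρ * r := by ring

theorem cosh_div_sinh_sub_one {x : ℝ} (hx : x ≠ 0) :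
    cosh x / sinh x - 1 = 2 * exp (-(2 * x)) / (1 - exp (-(2 * x))) := by
  have hsinh : sinh x ≠ 0 := sinh_ne_zero.2 hx
  have hsq : exp (-(2 * x)) = exp (-x) ^ 2 := by rw [← exp_nat_mul]; congr 1; push_cast; ring
  have hfactor : 1 - exp (-(2 * x)) = 2 * exp (-x) * sinh x := by
    have hexp : exp (-x) * exp x = 1 := by rw [← exp_add, neg_add_cancel, exp_zero]
    rw [hsq, sinh_eq]
    linear_combination -hexp
  rw [hfactor, div_sub_one hsinh, cosh_sub_sinh, hsq]
  field_simp

theorem hasDerivAt_horosphericalWeight (m : ℝ) (hρ : 0 < ρ) (hr : 0 < r) :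
    HasDerivAt (horosphericalWeight m ρ)
      ((sphereMeanCurvature m ρ r - m / ρ) * horosphericalWeight m ρ r) r := by
  have hbase := one_sub_exp_neg_two_mul_pos (div_pos hr hρ)
  have hderiv : HasDerivAt (fun r ↦ 1 - exp (-(2 * (r / ρ)))) (2 / ρ * exp (-(2 * (r / ρ)))) r :=
    ((((hasDerivAt_id r).div_const ρ).const_mul 2).neg.exp.const_sub 1).congr_deriv
      (by simp only [Pi.neg_apply, id]; ring)
  refine (hderiv.rpow_const (p := m) (Or.inl hbase.ne')).congr_deriv ?_
  have hdrift : sphereMeanCurvature m ρ r - m / ρ =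
      m / ρ * (2 * exp (-(2 * (r / ρ))) / (1 - exp (-(2 * (r / ρ))))) := by
    rw [← cosh_div_sinh_sub_one (div_pos hr hρ).ne', sphereMeanCurvature]
    ring
  rw [hdrift, horosphericalWeight, rpow_sub_one hbase.ne']
  ring

variable {φ φ' : ℝ → ℝ}

theorem IsSolutionOn.frequently_eq_zero_of_sq_div_lt (hρ : 0 < ρ)
    (h : IsSolutionOn (sphereMeanCurvature m ρ) (fun _ ↦ lam) φ φ' (Ioi 0))
    (hlam : m ^ 2 / (4 * ρ ^ 2) < lam) : ∃ᶠ r in atTop, φ r = 0 :=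
  h.frequently_eq_zero_of_tendsto_liouvillePotential
    (fun _ hr ↦ (hasDerivAt_sphereMeanCurvature m hρ.ne' (ne_of_gt hr)).differentiableAt)
    (sub_pos.2 hlam)
    (tendsto_liouvillePotential_sphereMeanCurvature m lam hρ)

theorem IsSolutionOn.ne_zero_of_le_sq_div (hρ : 0 < ρ) (hm : 1 ≤ m)
    (h : IsSolutionOn (sphereMeanCurvature m ρ) (fun _ ↦ lam) φ φ' (Ioi 0))
    (hcont : ContinuousOn φ (Ici 0)) (h0 : 0 < φ 0) (hlam : lam ≤ m ^ 2 / (4 * ρ ^ 2)) :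
    ∀ r ∈ Ioi 0, φ r ≠ 0 := by
  set a := m / (2 * ρ)
  have ha : 2 * a = m / ρ := by simp only [a]; field_simp
  have ha_nonneg : 0 ≤ a := by positivity
  have ha_sq : m ^ 2 / (4 * ρ ^ 2) = a ^ 2 := by simp only [a]; ring
  have hpotential (r : ℝ) (hr : r ∈ Ioi 0) :
      lam - a * sphereMeanCurvature m ρ r + a ^ 2 ≤ 0 := by
    have hcurv : 2 * a ≤ sphereMeanCurvature m ρ r :=
      ha ▸ le_sphereMeanCurvature hρ (zero_le_one.trans hm) hr
    nlinarith [mul_le_mul_of_nonneg_left hcurv ha_nonneg]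
  have hne : ∀ r ∈ Ioi 0, φ r * exp (a * r) ≠ 0 :=
    (h.mul_exp a).ne_zero_of_nonpos (hcont.mul (by fun_prop)) (by simpa using h0) hpotential
      (fun r hr ↦ by simpa only [ha] using hasDerivAt_horosphericalWeight m hρ hr)
      (fun r hr ↦ horosphericalWeight_pos m hρ hr) (fun r hr ↦ horosphericalWeight_le hρ hm hr)
  exact fun r hr ↦ left_ne_zero_of_mul (hne r hr)

end Hyperbolic

theorem radial_eigenfunction_vanishing_iff_general
    (ρ : ℝ) (hρ : 0 < ρ) (m : ℝ) (hm : 1 ≤ m)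
    (lam : ℝ) (φ : ℝ → ℝ)
    (hc : ContinuousOn φ (Set.Ici 0)) (h0 : φ 0 = 1)
    (hd : ∀ r : ℝ, 0 < r → DifferentiableAt ℝ φ r ∧ DifferentiableAt ℝ (deriv φ) r)
    (heq : ∀ r : ℝ, 0 < r →
      deriv (deriv φ) r
        + (m / ρ) * (Real.cosh (r / ρ) / Real.sinh (r / ρ)) * deriv φ r
        + lam * φ r = 0) :
    ((∃ r : ℝ, 0 < r ∧ φ r = 0) ↔ m ^ 2 / (4 * ρ ^ 2) < lam)
    ∧ (m ^ 2 / (4 * ρ ^ 2) < lam → {r : ℝ | 0 < r ∧ φ r = 0}.Infinite) := by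
  have hsol : IsSolutionOn (sphereMeanCurvature m ρ) (fun _ ↦ lam) φ (deriv φ) (Ioi 0) :=
    ⟨fun r hr ↦ (hd r hr).1.hasDerivAt, fun r hr ↦ (hd r hr).2.hasDerivAt.congr_deriv
      (by rw [sphereMeanCurvature]; linarith [heq r hr])⟩
  have hinf (hlam : m ^ 2 / (4 * ρ ^ 2) < lam) : {r : ℝ | 0 < r ∧ φ r = 0}.Infinite :=
    frequently_cofinite_iff_infinite.1 <| Frequently.filter_mono
      ((hsol.frequently_eq_zero_of_sq_div_lt hρ hlam).and_eventually (eventually_gt_atTop 0) |>.mono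
        fun _ ↦ And.symm) atTop_le_cofinite
  refine ⟨⟨?_, fun hlam ↦ (hinf hlam).nonempty⟩, hinf⟩
  rintro ⟨r, hr, hφr⟩
  by_contra! hlam
  exact hsol.ne_zero_of_le_sq_div hρ hm hc (h0 ▸ one_pos) hlam r hr hφr

/-- A normalized radial eigenfunction with real eigenvalue `λ` vanishes somewhere on
`(0, ∞)` iff `λ > k²/(4ρ²)`; and in that case it has infinitely many positive zeros. -/
theorem radial_eigenfunction_vanishing_iff
    (ρ : ℝ) (hρ : 0 < ρ) (k : ℕ) (hk : 1 ≤ k)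
    (lam : ℝ) (φ : ℝ → ℝ)
    (hc : ContinuousOn φ (Set.Ici 0)) (h0 : φ 0 = 1)
    (hd : ∀ r : ℝ, 0 < r → DifferentiableAt ℝ φ r ∧ DifferentiableAt ℝ (deriv φ) r)
    (heq : ∀ r : ℝ, 0 < r →
      deriv (deriv φ) r
        + ((k : ℝ) / ρ) * (Real.cosh (r / ρ) / Real.sinh (r / ρ)) * deriv φ r
        + lam * φ r = 0) :
    ((∃ r : ℝ, 0 < r ∧ φ r = 0) ↔ (k : ℝ) ^ 2 / (4 * ρ ^ 2) < lam)
    ∧ ((k : ℝ) ^ 2 / (4 * ρ ^ 2) < lam → {r : ℝ | 0 < r ∧ φ r = 0}.Infinite) :=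
  radial_eigenfunction_vanishing_iff_general ρ hρ k (by exact_mod_cast hk) lam φ hc h0 hd heq
end
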